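/- Under the standing blow-up assumptions, the blow-up masses satisfy the Pohozaev-type relation 4(σ₁ + σ₂) = (σ₁ − σ₂)². -/

import Mathlib

open MeasureTheory Metric Filter Set

noncomputable section

abbrev E2 := EuclideanSpace ℝ (Fin 2)

/-- The Laplacian of a function `u : ℝ² → ℝ`. -/
def lap (u : E2 → ℝ) (x : E2) : ℝ :=
  ∑ i : Fin 2, fderiv ℝ (fun y => fderiv ℝ u y (EuclideanSpace.single i 1)) x
    (EuclideanSpace.single i 1)

/-- The point `(r cos θ, r sin θ)` on the circle of radius `r` centered at the origin. -/
def circ (r θ : ℝ) : E2 := (WithLp.equiv 2 (Fin 2 → ℝ)).symm ![r * Real.cos θ, r * Real.sin θ]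

/-- Spherical average `ū(r) = (1/(2πr)) ∫_{∂B_r} u dσ`, via arc-length parametrization. -/
def sphAvg (f : E2 → ℝ) (r : ℝ) : ℝ :=
  (2 * Real.pi)⁻¹ * ∫ θ in (0:ℝ)..(2 * Real.pi), f (circ r θ)

/-- Local mass `σ₁ᵏ(r) = (1/(2π)) ∫_{B_r} h₁ᵏ e^{u_k}`. -/
def mass1 (u h : ℕ → E2 → ℝ) (k : ℕ) (r : ℝ) : ℝ :=
  (2 * Real.pi)⁻¹ * ∫ x in ball (0:E2) r, h k x * Real.exp (u k x)

/-- Local mass `σ₂ᵏ(r) = (1/(2π)) ∫_{B_r} h₂ᵏ e^{-u_k}`. -/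
def mass2 (u h : ℕ → E2 → ℝ) (k : ℕ) (r : ℝ) : ℝ :=
  (2 * Real.pi)⁻¹ * ∫ x in ball (0:E2) r, h k x * Real.exp (-(u k x))

/-- The standing blow-up assumptions for the sinh-Gordon equation in `B₁ ⊂ ℝ²`. -/
def BlowUpSetup (u h₁ h₂ : ℕ → E2 → ℝ) : Prop :=
  (∀ k, ContDiffOn ℝ 2 (u k) (ball 0 1)) ∧
  (∀ k, ∀ x ∈ ball (0:E2) 1,
      lap (u k) x + h₁ k x * Real.exp (u k x) - h₂ k x * Real.exp (-(u k x)) = 0) ∧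
  (∀ k, IntegrableOn (fun x => h₁ k x * Real.exp (u k x)) (ball (0:E2) 1)) ∧
  (∀ k, IntegrableOn (fun x => h₂ k x * Real.exp (-(u k x))) (ball (0:E2) 1)) ∧
  (∃ C : ℝ, 0 < C ∧
    (∀ k, ContDiffOn ℝ 3 (h₁ k) (ball 0 1) ∧ ContDiffOn ℝ 3 (h₂ k) (ball 0 1)) ∧
    (∀ k, ∀ x ∈ ball (0:E2) 1,
        C⁻¹ ≤ h₁ k x ∧ h₁ k x ≤ C ∧ C⁻¹ ≤ h₂ k x ∧ h₂ k x ≤ C) ∧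
    (∀ k, ∀ x ∈ ball (0:E2) 1, ∀ j : ℕ, j ≤ 3 →
        ‖iteratedFDerivWithin ℝ j (h₁ k) (ball 0 1) x‖ ≤ C ∧
        ‖iteratedFDerivWithin ℝ j (h₂ k) (ball 0 1) x‖ ≤ C) ∧
    (∀ k, ∀ x ∈ sphere (0:E2) 1, ∀ y ∈ sphere (0:E2) 1, |u k x - u k y| ≤ C) ∧
    (∀ k, (∫ x in ball (0:E2) 1, h₁ k x * Real.exp (u k x)) ≤ C) ∧
    (∀ k, (∫ x in ball (0:E2) 1, h₂ k x * Real.exp (-(u k x))) ≤ C)) ∧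
  (∀ K : Set E2, IsCompact K → K ⊆ ball 0 1 \ {0} → ∃ CK : ℝ, ∀ k, ∀ x ∈ K, |u k x| ≤ CK) ∧
  (∀ M : ℝ, ∀ᶠ k in atTop, ∃ x ∈ ball (0:E2) 1, M < |u k x|)

/-- `σ` is the iterated limit `lim_{δ→0⁺} lim_{k→∞} F k δ`. -/
def IsBlowUpMass (F : ℕ → ℝ → ℝ) (σ : ℝ) : Prop :=
  ∃ S : ℝ → ℝ, (∀ δ : ℝ, 0 < δ → δ < 1 → Tendsto (fun k => F k δ) atTop (nhds (S δ))) ∧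
    Tendsto S (nhdsWithin 0 (Ioi 0)) (nhds σ)

/-- The properties of the bubbling set `Σ_k` produced by the selection process. -/
def SelectionSet (u : ℕ → E2 → ℝ) (Sk : ℕ → Finset E2) : Prop :=
  (∀ k, (Sk k).Nonempty) ∧
  (∀ ε : ℝ, 0 < ε → ∀ᶠ k in atTop, ∀ x ∈ Sk k, ‖x‖ < ε) ∧
  (∃ C₁ : ℝ, 0 < C₁ ∧ ∀ k, ∀ x ∈ ball (0:E2) 1,
      |u k x| + 2 * Real.log (infDist x (↑(Sk k) : Set E2)) ≤ C₁)

/-- Convergence in `C²_loc(ℝ²)`. -/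
def ConvC2loc (w : ℕ → E2 → ℝ) (v : E2 → ℝ) : Prop :=
  ∀ K : Set E2, IsCompact K → ∀ j : ℕ, j ≤ 2 →
    TendstoUniformlyOn (fun k y => iteratedFDeriv ℝ j (w k) y) (iteratedFDeriv ℝ j v) atTop K

/-- Uniform convergence to `-∞` on every compact subset of `ℝ²`. -/
def TendsNegInfLoc (w : ℕ → E2 → ℝ) : Prop :=
  ∀ K : Set E2, IsCompact K → ∀ M : ℝ, ∀ᶠ k in atTop, ∀ y ∈ K, w k y ≤ -M

open scoped Topology ENNReal

/-- Unnormalised Fourier coefficient on `[0,2π]`. -/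
def fc (n : ℤ) (f : ℝ → ℂ) : ℂ :=
  ∫ θ in (0:ℝ)..(2 * Real.pi), Complex.exp (-(n * θ * Complex.I)) * f θ

lemma two_pi_pos' : (0:ℝ) < 2 * Real.pi := by positivity

lemma fc_eq (n : ℤ) (f : ℝ → ℂ) :
    fc n f = (2 * Real.pi : ℝ) * fourierCoeffOn two_pi_pos' f n := by
  rw [fourierCoeffOn_eq_integral, fc]
  have h : ((2 * Real.pi : ℝ) : ℂ) ≠ 0 := by exact_mod_cast two_pi_pos'.ne'
  rw [sub_zero, Complex.real_smul, ← mul_assoc]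
  have : ((2 * Real.pi : ℝ) : ℂ) * ((1 / (2 * Real.pi) : ℝ) : ℂ) = 1 := by
    push_cast; push_cast at h; field_simp
  rw [this, one_mul]
  refine intervalIntegral.integral_congr fun θ _ => ?_
  simp only [fourier_coe_apply, smul_eq_mul]
  congr 2
  push_cast; push_cast at h
  have : (Real.pi : ℂ) ≠ 0 := by exact_mod_cast Real.pi_ne_zero
  field_simp

lemma fc_hasSum (f : ℝ → ℂ) (hf : Continuous f) :
    HasSum (fun n : ℤ => ‖fc n f‖ ^ 2) (2 * Real.pi * ∫ θ in (0:ℝ)..(2 * Real.pi), ‖f θ‖ ^ 2) := by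
  have hL : MemLp f 2 (volume.restrict (Ioc 0 (2 * Real.pi))) := by
    have : IsFiniteMeasure (volume.restrict (Ioc 0 (2 * Real.pi))) := inferInstance
    obtain ⟨C, hC⟩ := (isCompact_Icc (a := (0:ℝ)) (b := 2 * Real.pi)).exists_bound_of_continuousOn
      hf.continuousOn
    refine MemLp.of_bound hf.aestronglyMeasurable C ?_
    filter_upwards [ae_restrict_mem measurableSet_Ioc] with x hx
    exact hC x ⟨hx.1.le, hx.2⟩
  have := (hasSum_sq_fourierCoeffOn two_pi_pos' hL).mul_left ((2 * Real.pi) ^ 2)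
  convert this using 1
  · rfl
  · ext n
    rw [fc_eq, norm_mul, mul_pow, Complex.norm_real, Real.norm_of_nonneg two_pi_pos'.le]
  · rw [sub_zero, smul_eq_mul]
    field_simp [Real.pi_ne_zero]

lemma fc_int (n : ℤ) (f : ℝ → ℂ) (hf : Continuous f) :
    IntervalIntegrable (fun θ : ℝ => Complex.exp (-(n * θ * Complex.I)) * f θ) volume 0 (2 * Real.pi) :=
  Continuous.intervalIntegrable (by fun_prop) _ _

lemma fc_conj (n : ℤ) (a : ℝ → ℝ) :
    fc (-n) (fun θ => (a θ : ℂ)) = (starRingEnd ℂ) (fc n (fun θ => (a θ : ℂ))) := by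
  rw [fc, fc, ← intervalIntegral.intervalIntegral_conj]
  refine intervalIntegral.integral_congr fun θ _ => ?_
  simp only [map_mul, Complex.conj_ofReal, ← Complex.exp_conj]
  congr 2
  simp

lemma fc_sub (n : ℤ) (a b : ℝ → ℝ) (ha : Continuous a) (hb : Continuous b) :
    fc n (fun θ => (a θ : ℂ) - Complex.I * b θ) =
      fc n (fun θ => (a θ : ℂ)) - Complex.I * fc n (fun θ => (b θ : ℂ)) := by
  rw [fc, fc, fc, ← intervalIntegral.integral_const_mul, ← intervalIntegral.integral_sub]
  · refine intervalIntegral.integral_congr fun θ _ => ?_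
    ring
  · exact fc_int n _ (by fun_prop)
  · exact (fc_int n _ (by fun_prop)).const_mul _

lemma parseval2 (a b : ℝ → ℝ) (ha : Continuous a) (hb : Continuous b) :
    HasSum (fun n : ℤ => (fc n (fun θ => (a θ : ℂ) - Complex.I * b θ) *
        fc (-n) (fun θ => (a θ : ℂ) - Complex.I * b θ)).re)
      (2 * Real.pi * ∫ θ in (0:ℝ)..(2 * Real.pi), (a θ ^ 2 - b θ ^ 2)) := by
  have h1 := fc_hasSum (fun θ => (a θ : ℂ)) (by fun_prop)
  have h2 := fc_hasSum (fun θ => (b θ : ℂ)) (by fun_prop)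
  convert h1.sub h2 using 1
  · rfl
  · ext n
    rw [fc_sub n a b ha hb, fc_sub (-n) a b ha hb, fc_conj, fc_conj]
    simp only [← Complex.normSq_eq_norm_sq, Complex.normSq_apply]
    simp
    ring
  · rw [← mul_sub, ← intervalIntegral.integral_sub]
    · simp
    · exact Continuous.intervalIntegrable (by fun_prop) _ _
    · exact Continuous.intervalIntegrable (by fun_prop) _ _

lemma parseval_bound (a b : ℝ → ℝ) (ha : Continuous a) (hb : Continuous b) (X : ℝ≥0∞)
    (hX : ∀ N : ℕ, ∑ n ∈ Finset.range N,
      ENNReal.ofReal (‖fc ((n : ℤ) + 1) (fun θ => (a θ : ℂ) - Complex.I * b θ)‖ *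
        ‖fc (-((n : ℤ) + 1)) (fun θ => (a θ : ℂ) - Complex.I * b θ)‖) ≤ X) :
    ENNReal.ofReal |2 * Real.pi * (∫ θ in (0:ℝ)..(2 * Real.pi), (a θ ^ 2 - b θ ^ 2)) -
      (fc 0 (fun θ => (a θ : ℂ) - Complex.I * b θ) ^ 2).re| ≤ 2 * X := by
  set F : ℝ → ℂ := fun θ => (a θ : ℂ) - Complex.I * b θ
  rcases eq_or_ne X ⊤ with rfl | hXt
  · simp
  have h := (parseval2 a b ha hb).nat_add_neg
  have h3 := ((hasSum_nat_add_iff' 1).mpr h).tendsto_sum_nat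
  have key : ∀ N : ℕ, |∑ i ∈ Finset.range N, ((fc ((i + 1 : ℕ) : ℤ) F * fc (-((i + 1 : ℕ) : ℤ)) F).re
      + (fc (-((i + 1 : ℕ) : ℤ)) F * fc (- -((i + 1 : ℕ) : ℤ)) F).re)| ≤ 2 * X.toReal := by
    intro N
    have h4 := ENNReal.toReal_mono hXt (hX N)
    rw [ENNReal.toReal_sum (by intros; exact ENNReal.ofReal_ne_top)] at h4
    refine (Finset.abs_sum_le_sum_abs _ _).trans ?_
    refine le_trans ?_ (mul_le_mul_of_nonneg_left h4 zero_le_two)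
    rw [Finset.mul_sum]
    refine Finset.sum_le_sum fun i _ => ?_
    rw [ENNReal.toReal_ofReal (by positivity), neg_neg, mul_comm (fc (-((i + 1 : ℕ) : ℤ)) F),
      ← two_mul, abs_mul, abs_two]
    gcongr
    refine (Complex.abs_re_le_norm _).trans ?_
    rw [norm_mul]
    push_cast
    rfl
  have h5 := le_of_tendsto h3.abs (Eventually.of_forall key)
  have h6 : 2 * X = ENNReal.ofReal (2 * X.toReal) := by
    rw [ENNReal.ofReal_mul zero_le_two, ENNReal.ofReal_toReal hXt]; simp
  rw [h6]
  refine ENNReal.ofReal_le_ofReal (le_trans (le_of_eq ?_) h5)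
  congr 1
  simp [sq]
  ring

/-- Integration by parts for the Fourier coefficient. -/
lemma fc_deriv (n : ℤ) (f f' : ℝ → ℂ) (hf : ∀ θ, HasDerivAt f (f' θ) θ) (hf' : Continuous f')
    (hper : f (2 * Real.pi) = f 0) :
    fc n f' = n * Complex.I * fc n f := by
  have hc : Continuous f := continuous_iff_continuousAt.2 fun θ => (hf θ).continuousAt
  have he : ∀ θ : ℝ, HasDerivAt (fun θ : ℝ => Complex.exp (-(n * θ * Complex.I)))
      (-(n * Complex.I) * Complex.exp (-(n * θ * Complex.I))) θ := by
    intro θ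
    have h1 : HasDerivAt (fun θ : ℝ => -((n : ℂ) * (θ : ℂ) * Complex.I)) (-(n * Complex.I)) θ := by
      have := (((hasDerivAt_id (θ : ℂ)).comp_ofReal.const_mul (n : ℂ)).mul_const Complex.I).neg
      rw [mul_one] at this
      exact this
    have := h1.cexp
    convert this using 1
    ring
  have h := intervalIntegral.integral_eq_sub_of_hasDerivAt (a := 0) (b := 2 * Real.pi)
    (fun θ _ => (he θ).mul (hf θ)) (Continuous.intervalIntegrable (by fun_prop) _ _)
  have e1 : Complex.exp (-(n * ((2 * Real.pi : ℝ) : ℂ) * Complex.I)) = 1 := by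
    rw [Complex.exp_eq_one_iff]
    exact ⟨-n, by push_cast; ring⟩
  rw [intervalIntegral.integral_add (Continuous.intervalIntegrable (by fun_prop) _ _)
    (Continuous.intervalIntegrable (by fun_prop) _ _)] at h
  simp only [Pi.mul_apply, e1, hper] at h
  simp only [mul_assoc (-((n : ℂ) * Complex.I))] at h
  rw [intervalIntegral.integral_const_mul] at h
  rw [fc, fc]
  simp at h
  linear_combination h

lemma param_cont {E : Type*} [NormedAddCommGroup E] [NormedSpace ℝ E] (G : ℝ → ℝ → E)
    (hG : ContinuousOn (Function.uncurry G) (Ioo (-1) 1 ×ˢ univ)) :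
    ContinuousOn (fun r => ∫ θ in (0:ℝ)..(2 * Real.pi), G r θ) (Ioo (-1) 1) := by
  rw [continuousOn_iff_continuous_domRestrict]
  have : Continuous (Function.uncurry fun (x : Ioo (-1:ℝ) 1) (θ : ℝ) => G x θ) := by
    have h1 : Continuous (fun p : Ioo (-1:ℝ) 1 × ℝ => ((p.1 : ℝ), p.2)) := by fun_prop
    exact hG.comp_continuous h1 (fun p => ⟨p.1.2, mem_univ _⟩)
  exact intervalIntegral.continuous_parametric_intervalIntegral_of_continuous' this 0 (2 * Real.pi)

lemma slice_cont {E : Type*} [TopologicalSpace E] (G : ℝ → ℝ → E)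
    (hG : ContinuousOn (Function.uncurry G) (Ioo (-1) 1 ×ˢ univ)) {r : ℝ} (hr : r ∈ Ioo (-1:ℝ) 1) :
    Continuous (G r) :=
  hG.comp_continuous (f := fun θ : ℝ => (r, θ)) (by fun_prop) (fun p => ⟨hr, mem_univ _⟩)

lemma param_deriv {E : Type*} [NormedAddCommGroup E] [NormedSpace ℝ E] (G G' : ℝ → ℝ → E)
    (hG : ContinuousOn (Function.uncurry G) (Ioo (-1) 1 ×ˢ univ))
    (hG' : ContinuousOn (Function.uncurry G') (Ioo (-1) 1 ×ˢ univ))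
    (hd : ∀ r ∈ Ioo (-1:ℝ) 1, ∀ θ, HasDerivAt (fun r => G r θ) (G' r θ) r)
    {r : ℝ} (hr : r ∈ Ioo (-1:ℝ) 1) :
    HasDerivAt (fun r => ∫ θ in (0:ℝ)..(2 * Real.pi), G r θ)
      (∫ θ in (0:ℝ)..(2 * Real.pi), G' r θ) r := by
  obtain ⟨ε, hε, hball⟩ := Metric.nhds_basis_closedBall.mem_iff.1 (Ioo_mem_nhds hr.1 hr.2)
  obtain ⟨C, hC⟩ := ((isCompact_closedBall r ε).prod
    (isCompact_Icc (a := (0:ℝ)) (b := 2 * Real.pi))).exists_bound_of_continuousOn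
    (hG'.mono (prod_mono hball (subset_univ _)))
  refine (intervalIntegral.hasDerivAt_integral_of_dominated_loc_of_deriv_le
    (bound := fun _ => C) (Metric.closedBall_mem_nhds r hε) ?_ ?_ ?_ ?_ ?_ ?_).2
  · filter_upwards [Ioo_mem_nhds hr.1 hr.2] with x hx
    exact (slice_cont G hG hx).aestronglyMeasurable
  · exact (slice_cont G hG hr).intervalIntegrable _ _
  · exact (slice_cont G' hG' hr).aestronglyMeasurable
  · refine ae_of_all _ fun t ht x hx => ?_
    rw [uIoc_of_le two_pi_pos'.le] at ht
    exact hC (x, t) ⟨hx, ht.1.le, ht.2⟩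
  · exact intervalIntegrable_const
  · exact ae_of_all _ fun t ht x hx => hd x (hball hx) t

lemma tonelli_inner (a L ρ ρ' : ℝ) (ha : 0 < a) (hL : 1 < L) :
    ∫⁻ r in Ioc a (2 * a), (if 0 < ρ ∧ ρ ≤ r ∧ r < ρ' then ENNReal.ofReal (ρ / (ρ' - ρ)) else 0) ≤
      ENNReal.ofReal (2 * a) * ((Ioc (a / L) (2 * a * L)).indicator 1 ρ *
        (Ioc (a / L) (2 * a * L)).indicator 1 ρ') + ENNReal.ofReal (a / (L - 1)) := by
  by_cases h : 0 < ρ ∧ ρ < ρ' ∧ ρ ≤ 2 * a ∧ a < ρ'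
  swap
  · rw [setLIntegral_congr_fun (g := fun _ => 0) measurableSet_Ioc]
    · simp
    · intro r hr
      simp only
      rw [if_neg]
      rintro ⟨h1, h2, h3⟩
      exact h ⟨h1, h2.trans_lt h3, h2.trans hr.2, hr.1.trans h3⟩
  obtain ⟨h0, h1, h2, h3⟩ := h
  have hd : 0 < ρ' - ρ := sub_pos.2 h1
  by_cases hg : a / L < ρ ∧ ρ' ≤ 2 * a * L
  · have m1 : ρ ∈ Ioc (a / L) (2 * a * L) := ⟨hg.1, h2.trans (by nlinarith)⟩
    have m2 : ρ' ∈ Ioc (a / L) (2 * a * L) := ⟨lt_of_le_of_lt (div_le_self ha.le hL.le) h3, hg.2⟩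
    rw [indicator_of_mem m1, indicator_of_mem m2]
    simp only [Pi.one_apply, mul_one]
    refine le_trans ?_ le_self_add
    calc _ ≤ ∫⁻ r, (Ico ρ ρ').indicator (fun _ => ENNReal.ofReal (ρ / (ρ' - ρ))) r := by
          refine (setLIntegral_le_lintegral _ _).trans (lintegral_mono fun r => ?_)
          by_cases hr : 0 < ρ ∧ ρ ≤ r ∧ r < ρ'
          · simp only [if_pos hr]
            rw [indicator_of_mem (show r ∈ Ico ρ ρ' from hr.2)]
          · simp only [if_neg hr]; exact zero_le
      _ = ENNReal.ofReal ρ := by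
          rw [lintegral_indicator measurableSet_Ico, setLIntegral_const, Real.volume_Ico,
            ← ENNReal.ofReal_mul (by positivity)]
          congr 1
          field_simp
      _ ≤ _ := ENNReal.ofReal_le_ofReal h2
  · have hK : ρ / (ρ' - ρ) ≤ 1 / (L - 1) := by
      rw [div_le_div_iff₀ hd (by linarith)]
      have : L * ρ ≤ ρ' := by
        rcases not_and_or.1 hg with h | h
        · rw [not_lt, le_div_iff₀ (by linarith)] at h
          linarith
        · nlinarith
      linarith
    refine le_trans ?_ le_add_self
    calc _ ≤ ∫⁻ r in Ioc a (2 * a), ENNReal.ofReal (1 / (L - 1)) := by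
          refine lintegral_mono fun r => ?_
          by_cases hr : 0 < ρ ∧ ρ ≤ r ∧ r < ρ'
          · simp only [if_pos hr]
            exact ENNReal.ofReal_le_ofReal hK
          · simp only [if_neg hr]; exact zero_le
      _ ≤ _ := by
          rw [setLIntegral_const, Real.volume_Ioc, ← ENNReal.ofReal_mul
            (by have : 0 < L - 1 := by linarith
                positivity)]
          refine ENNReal.ofReal_le_ofReal (le_of_eq ?_)
          ring

lemma tonelli_bound (ν : Measure ℝ) [IsFiniteMeasure ν] (a L : ℝ) (ha : 0 < a) (hL : 1 < L) :
    ∫⁻ r in Ioc a (2 * a), ∫⁻ ρ, ∫⁻ ρ',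
      (if 0 < ρ ∧ ρ ≤ r ∧ r < ρ' then ENNReal.ofReal (ρ / (ρ' - ρ)) else 0) ∂ν ∂ν ≤
      ENNReal.ofReal (2 * a) * ν (Ioc (a / L) (2 * a * L)) ^ 2 +
        ENNReal.ofReal (a / (L - 1)) * ν univ ^ 2 := by
  have hm : Measurable (fun p : ℝ × ℝ × ℝ =>
      (if 0 < p.2.1 ∧ p.2.1 ≤ p.1 ∧ p.1 < p.2.2 then
        ENNReal.ofReal (p.2.1 / (p.2.2 - p.2.1)) else 0)) := by
    refine Measurable.ite ?_ (by fun_prop) measurable_const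
    have m1 : Measurable (fun p : ℝ × ℝ × ℝ => p.1) := by fun_prop
    have m2 : Measurable (fun p : ℝ × ℝ × ℝ => p.2.1) := by fun_prop
    have m3 : Measurable (fun p : ℝ × ℝ × ℝ => p.2.2) := by fun_prop
    exact (measurableSet_lt measurable_const m2).inter
      ((measurableSet_le m2 m1).inter (measurableSet_lt m1 m3))
  rw [lintegral_lintegral_swap]
  swap
  · refine Measurable.aemeasurable ?_
    refine Measurable.lintegral_prod_right' (f := fun q : (ℝ × ℝ) × ℝ =>
      (if 0 < q.1.2 ∧ q.1.2 ≤ q.1.1 ∧ q.1.1 < q.2 then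
        ENNReal.ofReal (q.1.2 / (q.2 - q.1.2)) else 0)) ?_
    exact hm.comp (g := _) (f := fun q : (ℝ × ℝ) × ℝ => (q.1.1, q.1.2, q.2)) (by fun_prop)
  have h2 : ∀ ρ, ∫⁻ r in Ioc a (2 * a), ∫⁻ ρ',
      (if 0 < ρ ∧ ρ ≤ r ∧ r < ρ' then ENNReal.ofReal (ρ / (ρ' - ρ)) else 0) ∂ν ≤
      ∫⁻ ρ', (ENNReal.ofReal (2 * a) * ((Ioc (a / L) (2 * a * L)).indicator 1 ρ *
        (Ioc (a / L) (2 * a * L)).indicator 1 ρ') + ENNReal.ofReal (a / (L - 1))) ∂ν := by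
    intro ρ
    rw [lintegral_lintegral_swap]
    · exact lintegral_mono fun ρ' => tonelli_inner a L ρ ρ' ha hL
    · refine Measurable.aemeasurable ?_
      exact hm.comp (g := _) (f := fun q : ℝ × ℝ => (q.1, ρ, q.2)) (by fun_prop)
  refine (lintegral_mono h2).trans (le_of_eq ?_)
  have hi : Measurable ((Ioc (a / L) (2 * a * L)).indicator (1 : ℝ → ℝ≥0∞)) :=
    measurable_one.indicator measurableSet_Ioc
  have h3 : ∀ ρ, ∫⁻ ρ', (ENNReal.ofReal (2 * a) * ((Ioc (a / L) (2 * a * L)).indicator 1 ρ *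
        (Ioc (a / L) (2 * a * L)).indicator 1 ρ') + ENNReal.ofReal (a / (L - 1))) ∂ν =
      ENNReal.ofReal (2 * a) * ((Ioc (a / L) (2 * a * L)).indicator 1 ρ *
        ν (Ioc (a / L) (2 * a * L))) + ENNReal.ofReal (a / (L - 1)) * ν univ := by
    intro ρ
    rw [lintegral_add_right _ measurable_const, lintegral_const,
      lintegral_const_mul _ (hi.const_mul _), lintegral_const_mul _ hi,
      lintegral_indicator_one measurableSet_Ioc]
  simp_rw [h3]
  rw [lintegral_add_right _ measurable_const, lintegral_const,
    lintegral_const_mul _ (hi.mul_const _), lintegral_mul_const _ hi,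
    lintegral_indicator_one measurableSet_Ioc]
  ring

lemma circ_eq (r θ : ℝ) :
    circ r θ = Complex.orthonormalBasisOneI.repr (Complex.polarCoord.symm (r, θ)) := by
  ext i
  fin_cases i <;> simp [circ, Complex.polarCoord_symm_apply] <;> left
  · exact (Complex.cos_ofReal_re θ).symm
  · exact (Complex.sin_ofReal_re θ).symm

lemma circ_norm (r θ : ℝ) : ‖circ r θ‖ = |r| := by
  rw [circ_eq, LinearIsometryEquiv.norm_map, Complex.norm_polarCoord_symm]

lemma circ_mem {r : ℝ} (hr : r ∈ Ioo (-1:ℝ) 1) (θ : ℝ) : circ r θ ∈ ball (0:E2) 1 := by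
  rw [mem_ball_zero_iff, circ_norm, abs_lt]; exact hr

lemma circ_per (r : ℝ) : Function.Periodic (circ r) (2 * Real.pi) := by
  intro θ; simp [circ]

lemma circ_cont : Continuous (fun p : ℝ × ℝ => circ p.1 p.2) := by
  unfold circ
  apply (PiLp.continuous_toLp 2 _).comp
  refine continuous_pi fun i => ?_
  fin_cases i <;> simp <;> fun_prop

lemma polar_int (f : E2 → ℝ) (hf : ContinuousOn f (ball 0 1)) {r : ℝ} (h0 : 0 < r) (h1 : r < 1) :
    ∫ x in ball (0:E2) r, f x =
      ∫ ρ in (0:ℝ)..r, ρ * ∫ θ in (0:ℝ)..(2 * Real.pi), f (circ ρ θ) := by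
  rw [← integral_indicator measurableSet_ball,
    ← Complex.orthonormalBasisOneI.measurePreserving_repr.integral_comp
      Complex.orthonormalBasisOneI.measurableEquiv.measurableEmbedding,
    ← Complex.integral_comp_polarCoord_symm]
  have hce : ∀ p : ℝ × ℝ, Complex.orthonormalBasisOneI.repr (Complex.polarCoord.symm p) =
    circ p.1 p.2 := fun p => (circ_eq p.1 p.2).symm
  simp_rw [hce]
  rw [polarCoord_target]
  have hc : ContinuousOn (fun p : ℝ × ℝ => p.1 * f (circ p.1 p.2)) (Ioo (-1) 1 ×ˢ univ) :=
    continuousOn_fst.mul (hf.comp circ_cont.continuousOn fun p hp => circ_mem hp.1 _)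
  have e1 : ∫ p in Ioi (0:ℝ) ×ˢ Ioo (-Real.pi) Real.pi, p.1 • (ball (0:E2) r).indicator f (circ p.1 p.2)
      = ∫ p in Ioo (0:ℝ) r ×ˢ Ioo (-Real.pi) Real.pi, p.1 * f (circ p.1 p.2) := by
    rw [← integral_indicator (measurableSet_Ioi.prod measurableSet_Ioo),
      ← integral_indicator (measurableSet_Ioo.prod measurableSet_Ioo)]
    congr 1
    ext ⟨ρ, θ⟩
    simp only [indicator_apply, mem_prod, mem_Ioi, mem_Ioo, smul_eq_mul]
    by_cases hρ : 0 < ρ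
    · have hm : circ ρ θ ∈ ball (0:E2) r ↔ ρ < r := by
        rw [mem_ball_zero_iff, circ_norm, abs_of_pos hρ]
      by_cases hr : ρ < r
      · rw [indicator_of_mem (hm.2 hr)]; simp [hρ, hr]
      · rw [indicator_of_notMem (fun h => hr (hm.1 h))]; simp [hr]
    · simp [hρ]
  rw [show (∫ p in Ioi (0:ℝ) ×ˢ Ioo (-Real.pi) Real.pi,
    p.1 • (ball (0:E2) r).indicator f (circ p.1 p.2)) = _ from e1]
  rw [Measure.volume_eq_prod, setIntegral_prod]
  swap
  · have hK : IsCompact (Icc (0:ℝ) r ×ˢ Icc (-Real.pi) Real.pi) := isCompact_Icc.prod isCompact_Icc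
    refine IntegrableOn.mono_set (ContinuousOn.integrableOn_compact hK (hc.mono ?_))
      (prod_mono Ioo_subset_Icc_self Ioo_subset_Icc_self)
    exact prod_mono (fun x hx => ⟨by linarith [hx.1], by linarith [hx.2]⟩) (subset_univ _)
  rw [intervalIntegral.integral_of_le h0.le, integral_Ioc_eq_integral_Ioo]
  refine setIntegral_congr_fun measurableSet_Ioo fun ρ _ => ?_
  simp only
  rw [integral_const_mul, ← integral_Ioc_eq_integral_Ioo,
    ← intervalIntegral.integral_of_le (by linarith [Real.pi_pos])]
  congr 1
  have := ((circ_per ρ).comp f).intervalIntegral_add_eq (-Real.pi) 0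
  simp only [Function.comp] at this
  rw [show -Real.pi + 2 * Real.pi = Real.pi by ring, zero_add] at this
  exact this

/-- The cylinder domain in polar coordinates. -/
abbrev cyl : Set (ℝ × ℝ) := Ioo (-1) 1 ×ˢ univ

/-- Polar form of the equation. Here `a = r V_r`, `b = V_θ`. -/
structure PolarSys (C : ℝ) (V a b ar aθ br bθ f1 f2 f1r f2r : ℝ → ℝ → ℝ) : Prop where
  cV : ContinuousOn (Function.uncurry V) cyl
  ca : ContinuousOn (Function.uncurry a) cyl
  cb : ContinuousOn (Function.uncurry b) cyl
  car : ContinuousOn (Function.uncurry ar) cyl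
  caθ : ContinuousOn (Function.uncurry aθ) cyl
  cbr : ContinuousOn (Function.uncurry br) cyl
  cbθ : ContinuousOn (Function.uncurry bθ) cyl
  cf1 : ContinuousOn (Function.uncurry f1) cyl
  cf2 : ContinuousOn (Function.uncurry f2) cyl
  cf1r : ContinuousOn (Function.uncurry f1r) cyl
  cf2r : ContinuousOn (Function.uncurry f2r) cyl
  dar : ∀ r ∈ Ioo (-1:ℝ) 1, ∀ θ, HasDerivAt (fun r => a r θ) (ar r θ) r
  dbr : ∀ r ∈ Ioo (-1:ℝ) 1, ∀ θ, HasDerivAt (fun r => b r θ) (br r θ) r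
  df1 : ∀ r ∈ Ioo (-1:ℝ) 1, ∀ θ, HasDerivAt (fun r => f1 r θ) (f1r r θ) r
  df2 : ∀ r ∈ Ioo (-1:ℝ) 1, ∀ θ, HasDerivAt (fun r => f2 r θ) (f2r r θ) r
  daθ : ∀ r ∈ Ioo (-1:ℝ) 1, ∀ θ, HasDerivAt (a r) (aθ r θ) θ
  dbθ : ∀ r ∈ Ioo (-1:ℝ) 1, ∀ θ, HasDerivAt (b r) (bθ r θ) θ
  dVθ : ∀ r ∈ Ioo (-1:ℝ) 1, ∀ θ, HasDerivAt (V r) (b r θ) θ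
  pV : ∀ r, V r (2 * Real.pi) = V r 0
  pa : ∀ r, a r (2 * Real.pi) = a r 0
  pb : ∀ r, b r (2 * Real.pi) = b r 0
  eq1 : ∀ r ∈ Ioo (-1:ℝ) 1, ∀ θ, r * ar r θ + bθ r θ = -(r ^ 2 * (f1 r θ - f2 r θ))
  eq2 : ∀ r ∈ Ioo (-1:ℝ) 1, ∀ θ, r * br r θ = aθ r θ
  a0 : ∀ θ, a 0 θ = 0
  b0 : ∀ θ, b 0 θ = 0
  pos1 : ∀ r ∈ Ioo (-1:ℝ) 1, ∀ θ, 0 ≤ f1 r θ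
  pos2 : ∀ r ∈ Ioo (-1:ℝ) 1, ∀ θ, 0 ≤ f2 r θ
  poh1 : ∀ r ∈ Ioo (0:ℝ) 1, ∀ θ, |r * f1r r θ - a r θ * f1 r θ| ≤ C * r * f1 r θ
  poh2 : ∀ r ∈ Ioo (0:ℝ) 1, ∀ θ, |r * f2r r θ + a r θ * f2 r θ| ≤ C * r * f2 r θ

/-- Radial density. -/
def Nd (f : ℝ → ℝ → ℝ) (r : ℝ) : ℝ := r * ∫ θ in (0:ℝ)..(2 * Real.pi), f r θ

/-- Radial mass. -/
def Md (f : ℝ → ℝ → ℝ) (r : ℝ) : ℝ := ∫ ρ in (0:ℝ)..r, Nd f ρ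

/-- The complex field. -/
def Fd (a b : ℝ → ℝ → ℝ) (r θ : ℝ) : ℂ := (a r θ : ℂ) - Complex.I * b r θ

lemma Nd_cont (f : ℝ → ℝ → ℝ) (hf : ContinuousOn (Function.uncurry f) cyl) :
    ContinuousOn (Nd f) (Ioo (-1) 1) :=
  continuousOn_id.mul (param_cont f hf)

lemma Icc_sub {r : ℝ} (h1 : r < 1) : Icc 0 r ⊆ Ioo (-1:ℝ) 1 :=
  fun x hx => ⟨by linarith [hx.1], by linarith [hx.2]⟩

lemma Nd_ii (f : ℝ → ℝ → ℝ) (hf : ContinuousOn (Function.uncurry f) cyl) {s r : ℝ} (h0 : 0 ≤ s)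
    (hsr : s ≤ r) (h1 : r < 1) : IntervalIntegrable (Nd f) volume s r := by
  apply ContinuousOn.intervalIntegrable
  rw [uIcc_of_le hsr]
  exact (Nd_cont f hf).mono fun x hx => ⟨by linarith [hx.1], by linarith [hx.2]⟩

lemma fc_norm_le (n : ℤ) (f : ℝ → ℝ) : ‖fc n (fun θ => (f θ : ℂ))‖ ≤
    ∫ θ in (0:ℝ)..(2 * Real.pi), |f θ| := by
  refine (intervalIntegral.norm_integral_le_integral_norm two_pi_pos'.le).trans (le_of_eq ?_)
  refine intervalIntegral.integral_congr fun θ _ => ?_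
  have : -((n : ℂ) * θ * Complex.I) = ((-(n * θ) : ℝ) : ℂ) * Complex.I := by push_cast; ring
  simp only [norm_mul, this, Complex.norm_exp_ofReal_mul_I, one_mul, Complex.norm_real,
    Real.norm_eq_abs]

namespace PolarSys

variable {C : ℝ} {V a b ar aθ br bθ f1 f2 f1r f2r : ℝ → ℝ → ℝ}

lemma cF (h : PolarSys C V a b ar aθ br bθ f1 f2 f1r f2r) :
    ContinuousOn (Function.uncurry (Fd a b)) cyl := by
  have h1 := Complex.continuous_ofReal.comp_continuousOn h.ca
  have h2 := Complex.continuous_ofReal.comp_continuousOn h.cb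
  exact h1.sub (continuousOn_const.mul h2)

lemma cexpmul (n : ℤ) {G : ℝ → ℝ → ℂ} (hG : ContinuousOn (Function.uncurry G) cyl) :
    ContinuousOn (Function.uncurry (fun (r θ : ℝ) => Complex.exp (-(n * θ * Complex.I)) * G r θ)) cyl := by
  have : Continuous (fun p : ℝ × ℝ => Complex.exp (-(n * p.2 * Complex.I))) := by fun_prop
  exact this.continuousOn.mul hG

lemma c_cont (h : PolarSys C V a b ar aθ br bθ f1 f2 f1r f2r) (n : ℤ) :
    ContinuousOn (fun r => fc n (Fd a b r)) (Ioo (-1) 1) :=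
  param_cont _ (cexpmul n h.cF)

lemma c_deriv (h : PolarSys C V a b ar aθ br bθ f1 f2 f1r f2r) (n : ℤ) {r : ℝ}
    (hr : r ∈ Ioo (-1:ℝ) 1) :
    HasDerivAt (fun r => fc n (Fd a b r)) (fc n (Fd ar br r)) r := by
  have h1 := Complex.continuous_ofReal.comp_continuousOn h.car
  have h2 := Complex.continuous_ofReal.comp_continuousOn h.cbr
  have h3 : ContinuousOn (Function.uncurry (Fd ar br)) cyl := h1.sub (continuousOn_const.mul h2)
  refine param_deriv _ _ (cexpmul n h.cF) (cexpmul n h3) ?_ hr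
  intro r hr θ
  have := ((h.dar r hr θ).ofReal_comp).sub (((h.dbr r hr θ).ofReal_comp).const_mul Complex.I)
  exact this.const_mul _

lemma c_rel (h : PolarSys C V a b ar aθ br bθ f1 f2 f1r f2r) (n : ℤ) {r : ℝ}
    (hr : r ∈ Ioo (-1:ℝ) 1) :
    r * fc n (Fd ar br r) = n * fc n (Fd a b r) -
      r ^ 2 * fc n (fun θ => ((f1 r θ - f2 r θ : ℝ) : ℂ)) := by
  have ca := slice_cont a h.ca hr
  have cb := slice_cont b h.cb hr
  have caθ := slice_cont aθ h.caθ hr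
  have cbθ := slice_cont bθ h.cbθ hr
  have cf1 := slice_cont f1 h.cf1 hr
  have cf2 := slice_cont f2 h.cf2 hr
  have hd := fc_deriv n (Fd a b r) (Fd aθ bθ r) (fun θ =>
    ((h.daθ r hr θ).ofReal_comp).sub (((h.dbθ r hr θ).ofReal_comp).const_mul Complex.I))
    (by unfold Fd; fun_prop) (by simp [Fd, h.pa, h.pb])
  have e : (r : ℂ) * fc n (Fd ar br r) = -Complex.I * fc n (Fd aθ bθ r) -
      r ^ 2 * fc n (fun θ => ((f1 r θ - f2 r θ : ℝ) : ℂ)) := by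
    simp only [fc]
    rw [← intervalIntegral.integral_const_mul, ← intervalIntegral.integral_const_mul,
      ← intervalIntegral.integral_const_mul, ← intervalIntegral.integral_sub]
    · refine intervalIntegral.integral_congr fun θ _ => ?_
      have e1 := congrArg (fun x : ℝ => (x : ℂ)) (h.eq1 r hr θ)
      have e2 := congrArg (fun x : ℝ => (x : ℂ)) (h.eq2 r hr θ)
      push_cast at e1 e2
      simp only [Fd]
      push_cast
      linear_combination (Complex.exp (-(n * θ * Complex.I))) * (e1 - Complex.I * e2)
        - Complex.exp (-(n * θ * Complex.I)) * (bθ r θ) * Complex.I_sq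
    · exact Continuous.intervalIntegrable (by unfold Fd; fun_prop) _ _
    · exact Continuous.intervalIntegrable (by fun_prop) _ _
  rw [e, hd]
  linear_combination (-(n : ℂ) * fc n (Fd a b r)) * Complex.I_sq

lemma Nd_add (h : PolarSys C V a b ar aθ br bθ f1 f2 f1r f2r) {r : ℝ} (hr : r ∈ Ioo (-1:ℝ) 1) :
    Nd f1 r + Nd f2 r = r * ∫ θ in (0:ℝ)..(2 * Real.pi), (f1 r θ + f2 r θ) := by
  rw [Nd, Nd, intervalIntegral.integral_add ((slice_cont f1 h.cf1 hr).intervalIntegrable _ _)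
    ((slice_cont f2 h.cf2 hr).intervalIntegrable _ _)]
  ring

lemma Nd1_nonneg (h : PolarSys C V a b ar aθ br bθ f1 f2 f1r f2r) {r : ℝ} (hr : r ∈ Ico (0:ℝ) 1) :
    0 ≤ Nd f1 r :=
  mul_nonneg hr.1 (intervalIntegral.integral_nonneg two_pi_pos'.le
    fun θ _ => h.pos1 r ⟨by linarith [hr.1], hr.2⟩ θ)

lemma Nd2_nonneg (h : PolarSys C V a b ar aθ br bθ f1 f2 f1r f2r) {r : ℝ} (hr : r ∈ Ico (0:ℝ) 1) :
    0 ≤ Nd f2 r :=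
  mul_nonneg hr.1 (intervalIntegral.integral_nonneg two_pi_pos'.le
    fun θ _ => h.pos2 r ⟨by linarith [hr.1], hr.2⟩ θ)

/-- Total density. -/
lemma fc_f_le (h : PolarSys C V a b ar aθ br bθ f1 f2 f1r f2r) (n : ℤ) {r : ℝ}
    (hr : r ∈ Ico (0:ℝ) 1) :
    r * ‖fc n (fun θ => ((f1 r θ - f2 r θ : ℝ) : ℂ))‖ ≤ Nd f1 r + Nd f2 r := by
  have hr' : r ∈ Ioo (-1:ℝ) 1 := ⟨by linarith [hr.1], hr.2⟩
  have cf1 := slice_cont f1 h.cf1 hr'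
  have cf2 := slice_cont f2 h.cf2 hr'
  rw [h.Nd_add hr']
  refine mul_le_mul_of_nonneg_left ((fc_norm_le n _).trans ?_) hr.1
  refine intervalIntegral.integral_mono_on two_pi_pos'.le
    (Continuous.intervalIntegrable (by fun_prop) _ _)
    (Continuous.intervalIntegrable (by fun_prop) _ _) fun θ _ => ?_
  rw [abs_le]
  constructor <;> linarith [h.pos1 r hr' θ, h.pos2 r hr' θ]

lemma cfc (h : PolarSys C V a b ar aθ br bθ f1 f2 f1r f2r) (n : ℤ) :
    ContinuousOn (fun r => fc n (fun θ => ((f1 r θ - f2 r θ : ℝ) : ℂ))) (Ioo (-1) 1) :=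
  param_cont _ (cexpmul n (Complex.continuous_ofReal.comp_continuousOn (h.cf1.sub h.cf2)))

lemma c_zero (h : PolarSys C V a b ar aθ br bθ f1 f2 f1r f2r) (n : ℤ) :
    fc n (Fd a b 0) = 0 := by
  have : Fd a b 0 = fun _ => 0 := by ext θ; simp [Fd, h.a0, h.b0]
  rw [this]; simp [fc]

/-- Negative modes. -/
lemma c_neg_eq (h : PolarSys C V a b ar aθ br bθ f1 f2 f1r f2r) (n : ℕ) {r : ℝ}
    (hr : r ∈ Ioo (0:ℝ) 1) :
    (r : ℂ) ^ n * fc (-n) (Fd a b r) =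
      ∫ ρ in (0:ℝ)..r, -((ρ : ℂ) ^ (n + 1) * fc (-n) (fun θ => ((f1 ρ θ - f2 ρ θ : ℝ) : ℂ))) := by
  have hs := Icc_sub hr.2
  have := intervalIntegral.integral_eq_sub_of_hasDerivAt_of_le hr.1.le
    (f := fun r : ℝ => (r : ℂ) ^ n * fc (-n) (Fd a b r))
    (f' := fun ρ : ℝ => -((ρ : ℂ) ^ (n + 1) * fc (-n) (fun θ => ((f1 ρ θ - f2 ρ θ : ℝ) : ℂ))))
    ?_ ?_ ?_
  · rw [this, h.c_zero]; simp
  · exact (by fun_prop : Continuous fun r : ℝ => (r : ℂ) ^ n).continuousOn.mul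
      ((h.c_cont (-n)).mono hs)
  · intro ρ hρ
    have hρ' : ρ ∈ Ioo (-1:ℝ) 1 := hs ⟨hρ.1.le, hρ.2.le⟩
    have h1 := h.c_deriv (-n) hρ'
    have h2 := h.c_rel (-n) hρ'
    have h3 : HasDerivAt (fun r : ℝ => (r : ℂ) ^ n) (n * (ρ : ℂ) ^ (n - 1)) ρ := by
      simpa using (hasDerivAt_pow n (ρ : ℂ)).comp_ofReal
    have hρ0 : (ρ : ℂ) ≠ 0 := by exact_mod_cast hρ.1.ne'
    refine (h3.mul h1).congr_deriv ?_
    apply mul_left_cancel₀ hρ0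
    rcases n with _ | n
    · simp at h2 ⊢
      rw [h2]; ring
    · simp only [Nat.add_sub_cancel]
      push_cast at h2 ⊢
      linear_combination (ρ : ℂ) ^ (n + 1) * h2
  · apply ContinuousOn.intervalIntegrable
    rw [uIcc_of_le hr.1.le]
    exact (((by fun_prop : Continuous fun r : ℝ => (r : ℂ) ^ (n+1)).continuousOn.mul
      ((h.cfc (-n)).mono hs))).neg

lemma c_zero_eq (h : PolarSys C V a b ar aθ br bθ f1 f2 f1r f2r) {r : ℝ} (hr : r ∈ Ioo (0:ℝ) 1) :
    fc 0 (Fd a b r) = ((-(Md f1 r - Md f2 r) : ℝ) : ℂ) := by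
  have := h.c_neg_eq 0 hr
  simp only [pow_zero, one_mul, Nat.cast_zero, neg_zero, zero_add, pow_one] at this
  rw [this, Md, Md, ← intervalIntegral.integral_sub (Nd_ii f1 h.cf1 le_rfl hr.1.le hr.2)
    (Nd_ii f2 h.cf2 le_rfl hr.1.le hr.2), ← intervalIntegral.integral_neg,
    ← intervalIntegral.integral_ofReal]
  refine intervalIntegral.integral_congr fun ρ hρ => ?_
  rw [uIcc_of_le hr.1.le] at hρ
  have hρ' := Icc_sub hr.2 hρ
  have e : fc 0 (fun θ => ((f1 ρ θ - f2 ρ θ : ℝ) : ℂ)) =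
      ((∫ θ in (0:ℝ)..(2 * Real.pi), (f1 ρ θ - f2 ρ θ) : ℝ) : ℂ) := by
    rw [fc, ← intervalIntegral.integral_ofReal]
    simp
  simp only [e]
  rw [intervalIntegral.integral_sub ((slice_cont f1 h.cf1 hρ').intervalIntegrable _ _)
    ((slice_cont f2 h.cf2 hρ').intervalIntegrable _ _), Nd, Nd]
  push_cast
  ring

lemma c_neg_le (h : PolarSys C V a b ar aθ br bθ f1 f2 f1r f2r) (n : ℕ) {r : ℝ}
    (hr : r ∈ Ioo (0:ℝ) 1) :
    ‖fc (-n) (Fd a b r)‖ ≤ ∫ ρ in (0:ℝ)..r, (ρ / r) ^ n * (Nd f1 ρ + Nd f2 ρ) := by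
  have hs := Icc_sub hr.2
  have h1 := congrArg norm (h.c_neg_eq n hr)
  rw [norm_mul, norm_pow, Complex.norm_real, Real.norm_of_nonneg hr.1.le] at h1
  have hrn : 0 < r ^ n := pow_pos hr.1 n
  have h2 : ‖∫ ρ in (0:ℝ)..r, -((ρ : ℂ) ^ (n + 1) *
      fc (-n) (fun θ => ((f1 ρ θ - f2 ρ θ : ℝ) : ℂ)))‖ ≤
      ∫ ρ in (0:ℝ)..r, ρ ^ n * (Nd f1 ρ + Nd f2 ρ) := by
    refine (intervalIntegral.norm_integral_le_integral_norm hr.1.le).trans ?_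
    refine intervalIntegral.integral_mono_on hr.1.le ?_ ?_ ?_
    · apply ContinuousOn.intervalIntegrable
      rw [uIcc_of_le hr.1.le]
      exact (((by fun_prop : Continuous fun r : ℝ => (r : ℂ) ^ (n+1)).continuousOn.mul
        ((h.cfc (-n)).mono hs))).neg.norm
    · apply ContinuousOn.intervalIntegrable
      rw [uIcc_of_le hr.1.le]
      exact (by fun_prop : Continuous fun r : ℝ => r ^ n).continuousOn.mul
        (((Nd_cont f1 h.cf1).mono hs).add ((Nd_cont f2 h.cf2).mono hs))
    · intro ρ hρ
      have := h.fc_f_le (-n) (r := ρ) ⟨hρ.1, by linarith [hρ.2, hr.2]⟩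
      rw [norm_neg, norm_mul, norm_pow, Complex.norm_real, Real.norm_of_nonneg hρ.1, pow_succ,
        mul_assoc]
      exact mul_le_mul_of_nonneg_left this (pow_nonneg hρ.1 n)
  have h3 : ∫ ρ in (0:ℝ)..r, (ρ / r) ^ n * (Nd f1 ρ + Nd f2 ρ) =
      (r ^ n)⁻¹ * ∫ ρ in (0:ℝ)..r, ρ ^ n * (Nd f1 ρ + Nd f2 ρ) := by
    rw [← intervalIntegral.integral_const_mul]
    refine intervalIntegral.integral_congr fun ρ _ => ?_
    simp only [div_pow]
    field_simp
  rw [h3, inv_mul_eq_div, le_div_iff₀ hrn, mul_comm, h1]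
  exact h2

lemma c_pos_le (h : PolarSys C V a b ar aθ br bθ f1 f2 f1r f2r) (n : ℕ) {r R : ℝ}
    (hr : 0 < r) (hrR : r < R) (hR : R < 1) :
    ‖fc n (Fd a b r)‖ ≤ (r / R) ^ n * ‖fc n (Fd a b R)‖ +
      ∫ ρ in r..R, (r / ρ) ^ n * (Nd f1 ρ + Nd f2 ρ) := by
  have hs : Icc r R ⊆ Ioo (-1:ℝ) 1 := fun x hx => ⟨by linarith [hx.1], by linarith [hx.2]⟩
  have hpow : ContinuousOn (fun ρ : ℝ => ((r / ρ) ^ n : ℝ)) (Icc r R) := by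
    refine ContinuousOn.pow (continuousOn_const.div continuousOn_id ?_) n
    intro x hx
    exact (hr.trans_le hx.1).ne'
  have hI : ContinuousOn (fun ρ : ℝ => -((((r / ρ) ^ n : ℝ) : ℂ) * (ρ *
      fc n (fun θ => ((f1 ρ θ - f2 ρ θ : ℝ) : ℂ))))) (Icc r R) :=
    ((Complex.continuous_ofReal.comp_continuousOn hpow).mul
      (Complex.continuous_ofReal.continuousOn.mul ((h.cfc n).mono hs))).neg
  have key := intervalIntegral.integral_eq_sub_of_hasDerivAt_of_le hrR.le
    (f := fun ρ : ℝ => (((r / ρ) ^ n : ℝ) : ℂ) * fc n (Fd a b ρ))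
    (f' := fun ρ : ℝ => -((((r / ρ) ^ n : ℝ) : ℂ) * (ρ *
      fc n (fun θ => ((f1 ρ θ - f2 ρ θ : ℝ) : ℂ)))))
    ?_ ?_ ?_
  · have e1 : fc n (Fd a b r) = (((r / R) ^ n : ℝ) : ℂ) * fc n (Fd a b R) -
        ∫ ρ in r..R, -((((r / ρ) ^ n : ℝ) : ℂ) * (ρ *
          fc n (fun θ => ((f1 ρ θ - f2 ρ θ : ℝ) : ℂ)))) := by
      rw [key]; simp [div_self hr.ne']
    rw [e1]
    refine (norm_sub_le _ _).trans ?_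
    gcongr
    · have : 0 < R := hr.trans hrR
      rw [norm_mul, Complex.norm_real, Real.norm_of_nonneg (by positivity)]
    · refine (intervalIntegral.norm_integral_le_integral_norm hrR.le).trans ?_
      refine intervalIntegral.integral_mono_on hrR.le ?_ ?_ ?_
      · apply ContinuousOn.intervalIntegrable
        rw [uIcc_of_le hrR.le]
        exact hI.norm
      · apply ContinuousOn.intervalIntegrable
        rw [uIcc_of_le hrR.le]
        exact hpow.mul (((Nd_cont f1 h.cf1).mono hs).add ((Nd_cont f2 h.cf2).mono hs))
      · intro ρ hρ
        have hρ0 : 0 < ρ := hr.trans_le hρ.1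
        have := h.fc_f_le n (r := ρ) ⟨hρ0.le, by linarith [hρ.2]⟩
        rw [norm_neg, norm_mul, norm_mul, Complex.norm_real, Complex.norm_real,
          Real.norm_of_nonneg hρ0.le, Real.norm_of_nonneg (by positivity)]
        exact mul_le_mul_of_nonneg_left this (by positivity)
  · exact (Complex.continuous_ofReal.comp_continuousOn hpow).mul ((h.c_cont n).mono hs)
  · intro ρ hρ
    have hρ0 : 0 < ρ := hr.trans hρ.1
    have hρ' : ρ ∈ Ioo (-1:ℝ) 1 := hs ⟨hρ.1.le, hρ.2.le⟩
    have h1 := h.c_deriv n hρ'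
    have h2 := h.c_rel n hρ'
    have h3 : HasDerivAt (fun ρ : ℝ => (r / ρ) ^ n) (-(n * (r / ρ) ^ n / ρ)) ρ := by
      have := ((hasDerivAt_inv hρ0.ne').const_mul r).pow n
      refine HasDerivAt.congr_deriv (f := fun ρ : ℝ => (r / ρ) ^ n) this ?_
      rcases n with _ | n
      · simp
      · simp only [Nat.add_sub_cancel, div_pow, mul_pow, pow_succ, inv_pow]
        field_simp
    have hρc : (ρ : ℂ) ≠ 0 := by exact_mod_cast hρ0.ne'
    refine ((h3.ofReal_comp).mul h1).congr_deriv ?_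
    apply mul_left_cancel₀ hρc
    push_cast at h2 ⊢
    field_simp
    linear_combination ((r:ℂ) / ρ) ^ n * h2
  · apply ContinuousOn.intervalIntegrable
    rw [uIcc_of_le hrR.le]
    exact hI

end PolarSys

namespace PolarSys

variable {C : ℝ} {V a b ar aθ br bθ f1 f2 f1r f2r : ℝ → ℝ → ℝ}

lemma c_neg_le' (h : PolarSys C V a b ar aθ br bθ f1 f2 f1r f2r) (n : ℕ) {r : ℝ}
    (hr : r ∈ Ioo (0:ℝ) 1) :
    ‖fc (-n) (Fd a b r)‖ ≤ Md f1 r + Md f2 r := by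
  have hs := Icc_sub hr.2
  refine (h.c_neg_le n hr).trans ?_
  rw [Md, Md, ← intervalIntegral.integral_add (Nd_ii f1 h.cf1 le_rfl hr.1.le hr.2)
    (Nd_ii f2 h.cf2 le_rfl hr.1.le hr.2)]
  refine intervalIntegral.integral_mono_on hr.1.le ?_ ((Nd_ii f1 h.cf1 le_rfl hr.1.le hr.2).add
    (Nd_ii f2 h.cf2 le_rfl hr.1.le hr.2)) ?_
  · apply ContinuousOn.intervalIntegrable
    rw [uIcc_of_le hr.1.le]
    exact (by fun_prop : Continuous fun ρ : ℝ => (ρ / r) ^ n).continuousOn.mul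
        (((Nd_cont f1 h.cf1).mono hs).add ((Nd_cont f2 h.cf2).mono hs))
  · intro ρ hρ
    have hρ' : ρ ∈ Ico (0:ℝ) 1 := ⟨hρ.1, by linarith [hρ.2, hr.2]⟩
    refine mul_le_of_le_one_left (add_nonneg (h.Nd1_nonneg hρ') (h.Nd2_nonneg hρ')) ?_
    exact pow_le_one₀ (div_nonneg hρ.1 hr.1.le) (div_le_one_of_le₀ hρ.2 hr.1.le)

lemma c_R_le (h : PolarSys C V a b ar aθ br bθ f1 f2 f1r f2r) (n : ℕ) {R CV : ℝ}
    (hR : R ∈ Ioo (0:ℝ) 1) (hV : ∀ θ, |V R θ| ≤ CV) :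
    ‖fc n (Fd a b R)‖ ≤ (Md f1 R + Md f2 R) + 4 * Real.pi * n * CV := by
  have hR' : R ∈ Ioo (-1:ℝ) 1 := ⟨by linarith [hR.1], hR.2⟩
  have ca := slice_cont a h.ca hR'
  have cb := slice_cont b h.cb hR'
  have cV := slice_cont V h.cV hR'
  have e1 : fc n (Fd a b R) = _ := fc_sub n (a R) (b R) ca cb
  have e2 : fc (-n) (Fd a b R) = _ := fc_sub (-n) (a R) (b R) ca cb
  have e3 := fc_deriv n (fun θ => (V R θ : ℂ)) (fun θ => (b R θ : ℂ))
    (fun θ => (h.dVθ R hR' θ).ofReal_comp) (by fun_prop) (by simp [h.pV])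
  rw [fc_conj, fc_conj] at e2
  have e4 : fc n (Fd a b R) = (starRingEnd ℂ) (fc (-n) (Fd a b R)) +
      2 * n * fc n (fun θ => (V R θ : ℂ)) := by
    rw [e1, e2]
    simp only [map_sub, map_mul, Complex.conj_conj, Complex.conj_I]
    rw [e3]
    push_cast
    linear_combination (-2 * (n : ℂ) * fc n (fun θ => (V R θ : ℂ))) * Complex.I_sq
  rw [e4]
  refine (norm_add_le _ _).trans ?_
  rw [RCLike.norm_conj]
  refine add_le_add (h.c_neg_le' n hR) ?_
  have h5 : ‖fc n (fun θ => (V R θ : ℂ))‖ ≤ 2 * Real.pi * CV := by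
    refine (fc_norm_le n _).trans ?_
    have := intervalIntegral.integral_mono_on (μ := volume) (f := fun θ => |V R θ|) (g := fun _ => CV)
      two_pi_pos'.le (Continuous.intervalIntegrable (by fun_prop) _ _) intervalIntegrable_const
      (fun θ _ => hV θ)
    simpa using this
  rw [norm_mul, norm_mul, Complex.norm_natCast]
  simp only [Complex.norm_ofNat]
  calc _ ≤ 2 * (n : ℝ) * (2 * Real.pi * CV) := by gcongr
    _ = _ := by ring

lemma poh_deriv (h : PolarSys C V a b ar aθ br bθ f1 f2 f1r f2r) {r : ℝ}
    (hr : r ∈ Ioo (0:ℝ) 1) :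
    |(∫ θ in (0:ℝ)..(2 * Real.pi), (a r θ * ar r θ - b r θ * br r θ + 2 * r * (f1 r θ + f2 r θ)
      + r ^ 2 * (f1r r θ + f2r r θ))) - 2 * (Nd f1 r + Nd f2 r)| ≤ C * r * (Nd f1 r + Nd f2 r) := by
  have hr' : r ∈ Ioo (-1:ℝ) 1 := ⟨by linarith [hr.1], hr.2⟩
  have ca := slice_cont a h.ca hr'
  have cb := slice_cont b h.cb hr'
  have caθ := slice_cont aθ h.caθ hr'
  have cbθ := slice_cont bθ h.cbθ hr'
  have car := slice_cont ar h.car hr'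
  have cbr := slice_cont br h.cbr hr'
  have cf1 := slice_cont f1 h.cf1 hr'
  have cf2 := slice_cont f2 h.cf2 hr'
  have cf1r := slice_cont f1r h.cf1r hr'
  have cf2r := slice_cont f2r h.cf2r hr'
  have z : ∫ θ in (0:ℝ)..(2 * Real.pi), (aθ r θ * b r θ + a r θ * bθ r θ) = 0 := by
    rw [intervalIntegral.integral_eq_sub_of_hasDerivAt
      (fun θ _ => (h.daθ r hr' θ).mul (h.dbθ r hr' θ)) (Continuous.intervalIntegrable (by fun_prop) _ _)]
    simp [h.pa, h.pb]
  have key : r * ((∫ θ in (0:ℝ)..(2 * Real.pi), (a r θ * ar r θ - b r θ * br r θ +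
      2 * r * (f1 r θ + f2 r θ) + r ^ 2 * (f1r r θ + f2r r θ))) - 2 * (Nd f1 r + Nd f2 r)) =
      r ^ 2 * ∫ θ in (0:ℝ)..(2 * Real.pi), ((r * f1r r θ - a r θ * f1 r θ) +
        (r * f2r r θ + a r θ * f2 r θ)) := by
    rw [h.Nd_add hr']
    have : ∀ x : ℝ, x = x - ∫ θ in (0:ℝ)..(2 * Real.pi), (aθ r θ * b r θ + a r θ * bθ r θ) := by
      intro x; rw [z, sub_zero]
    rw [this (r ^ 2 * _), ← mul_assoc, ← intervalIntegral.integral_const_mul,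
      ← intervalIntegral.integral_const_mul, ← intervalIntegral.integral_sub,
      ← intervalIntegral.integral_const_mul, ← intervalIntegral.integral_sub]
    · refine intervalIntegral.integral_congr fun θ _ => ?_
      have e1 := h.eq1 r hr' θ
      have e2 := h.eq2 r hr' θ
      linear_combination a r θ * e1 - b r θ * e2
    all_goals exact Continuous.intervalIntegrable (by fun_prop) _ _
  have hb : |∫ θ in (0:ℝ)..(2 * Real.pi), ((r * f1r r θ - a r θ * f1 r θ) +
        (r * f2r r θ + a r θ * f2 r θ))| ≤ C * (Nd f1 r + Nd f2 r) := by
    rw [h.Nd_add hr', ← mul_assoc, ← intervalIntegral.integral_const_mul]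
    refine (intervalIntegral.abs_integral_le_integral_abs two_pi_pos'.le).trans ?_
    refine intervalIntegral.integral_mono_on two_pi_pos'.le
      (Continuous.intervalIntegrable (by fun_prop) _ _)
      (Continuous.intervalIntegrable (by fun_prop) _ _) fun θ _ => ?_
    refine (abs_add_le _ _).trans ?_
    linarith [h.poh1 r hr θ, h.poh2 r hr θ]
  have h2 := congrArg abs key
  rw [abs_mul, abs_mul, abs_of_pos hr.1, abs_of_pos (pow_pos hr.1 2)] at h2
  have h3 : r * |(∫ θ in (0:ℝ)..(2 * Real.pi), (a r θ * ar r θ - b r θ * br r θ +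
      2 * r * (f1 r θ + f2 r θ) + r ^ 2 * (f1r r θ + f2r r θ))) - 2 * (Nd f1 r + Nd f2 r)| ≤
      r * (C * r * (Nd f1 r + Nd f2 r)) := by
    rw [h2]
    calc _ ≤ r ^ 2 * (C * (Nd f1 r + Nd f2 r)) := by gcongr
      _ = _ := by ring
  exact le_of_mul_le_mul_left h3 hr.1

lemma poh (h : PolarSys C V a b ar aθ br bθ f1 f2 f1r f2r) (hC : 0 ≤ C) {r : ℝ}
    (hr : r ∈ Ioo (0:ℝ) 1) :
    |2⁻¹ * (∫ θ in (0:ℝ)..(2 * Real.pi), (a r θ ^ 2 - b r θ ^ 2)) + r * (Nd f1 r + Nd f2 r)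
      - 2 * (Md f1 r + Md f2 r)| ≤ C * r * (Md f1 r + Md f2 r) := by
  have hs := Icc_sub hr.2
  have hr' : r ∈ Ioo (-1:ℝ) 1 := ⟨by linarith [hr.1], hr.2⟩
  set P : ℝ → ℝ := fun r => ∫ θ in (0:ℝ)..(2 * Real.pi), (2⁻¹ * (a r θ ^ 2 - b r θ ^ 2) +
    r ^ 2 * (f1 r θ + f2 r θ)) with hP
  set P' : ℝ → ℝ := fun r => ∫ θ in (0:ℝ)..(2 * Real.pi), (a r θ * ar r θ - b r θ * br r θ +
      2 * r * (f1 r θ + f2 r θ) + r ^ 2 * (f1r r θ + f2r r θ)) with hP'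
  have c1 : ContinuousOn (Function.uncurry fun r θ => (2⁻¹ * (a r θ ^ 2 - b r θ ^ 2) +
    r ^ 2 * (f1 r θ + f2 r θ))) cyl :=
    (continuousOn_const.mul ((h.ca.pow 2).sub (h.cb.pow 2))).add
      ((continuousOn_fst.pow 2).mul (h.cf1.add h.cf2))
  have c2 : ContinuousOn (Function.uncurry fun r θ => (a r θ * ar r θ - b r θ * br r θ +
      2 * r * (f1 r θ + f2 r θ) + r ^ 2 * (f1r r θ + f2r r θ))) cyl :=
    ((((h.ca.mul h.car).sub (h.cb.mul h.cbr)).add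
      ((continuousOn_const.mul continuousOn_fst).mul (h.cf1.add h.cf2)))).add
      ((continuousOn_fst.pow 2).mul (h.cf1r.add h.cf2r))
  have hd : ∀ ρ ∈ Ioo (-1:ℝ) 1, HasDerivAt P (P' ρ) ρ := by
    intro ρ hρ
    refine param_deriv _ _ c1 c2 ?_ hρ
    intro ρ hρ θ
    have h1 := (((h.dar ρ hρ θ).pow 2).sub ((h.dbr ρ hρ θ).pow 2)).const_mul (2⁻¹ : ℝ)
    have h2 := ((hasDerivAt_id ρ).pow 2).mul ((h.df1 ρ hρ θ).add (h.df2 ρ hρ θ))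
    refine (h1.add h2).congr_deriv ?_
    simp
    ring
  have hPc : ContinuousOn P (Ioo (-1) 1) := param_cont _ c1
  have hPc' : ContinuousOn P' (Ioo (-1) 1) := param_cont _ c2
  have hi : IntervalIntegrable P' volume 0 r := by
    apply ContinuousOn.intervalIntegrable
    rw [uIcc_of_le hr.1.le]
    exact hPc'.mono hs
  have hN1 := Nd_ii f1 h.cf1 le_rfl hr.1.le hr.2
  have hN2 := Nd_ii f2 h.cf2 le_rfl hr.1.le hr.2
  have hf := intervalIntegral.integral_eq_sub_of_hasDerivAt_of_le hr.1.le (hPc.mono hs)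
    (fun ρ hρ => hd ρ (hs ⟨hρ.1.le, hρ.2.le⟩)) hi
  have hP0 : P 0 = 0 := by simp [hP, h.a0, h.b0]
  have hPr : P r = 2⁻¹ * (∫ θ in (0:ℝ)..(2 * Real.pi), (a r θ ^ 2 - b r θ ^ 2)) +
      r * (Nd f1 r + Nd f2 r) := by
    have ca := slice_cont a h.ca hr'
    have cb := slice_cont b h.cb hr'
    have cf1 := slice_cont f1 h.cf1 hr'
    have cf2 := slice_cont f2 h.cf2 hr'
    rw [hP, h.Nd_add hr', ← mul_assoc, ← sq, ← intervalIntegral.integral_const_mul,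
      ← intervalIntegral.integral_const_mul, ← intervalIntegral.integral_add]
    all_goals exact Continuous.intervalIntegrable (by fun_prop) _ _
  have hM : Md f1 r + Md f2 r = ∫ ρ in (0:ℝ)..r, (Nd f1 ρ + Nd f2 ρ) := by
    rw [intervalIntegral.integral_add hN1 hN2]; rfl
  have e : P r - 2 * (Md f1 r + Md f2 r) = ∫ ρ in (0:ℝ)..r, (P' ρ - 2 * (Nd f1 ρ + Nd f2 ρ)) := by
    rw [intervalIntegral.integral_sub hi ((hN1.add hN2).const_mul 2),
      intervalIntegral.integral_const_mul, hf, hP0, hM]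
    ring
  rw [← hPr, e, hM, ← intervalIntegral.integral_const_mul]
  refine (intervalIntegral.abs_integral_le_integral_abs hr.1.le).trans ?_
  rw [intervalIntegral.integral_of_le hr.1.le, intervalIntegral.integral_of_le hr.1.le,
    integral_Ioc_eq_integral_Ioo, integral_Ioc_eq_integral_Ioo]
  refine setIntegral_mono_on ?_ ?_ measurableSet_Ioo ?_
  · have := (hi.sub ((hN1.add hN2).const_mul 2)).abs
    exact ((intervalIntegrable_iff_integrableOn_Ioc_of_le hr.1.le).1 this).mono_set Ioo_subset_Ioc_self
  · have := (hN1.add hN2).const_mul (C * r)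
    exact ((intervalIntegrable_iff_integrableOn_Ioc_of_le hr.1.le).1 this).mono_set Ioo_subset_Ioc_self
  · intro ρ hρ
    have hρ1 : ρ ∈ Ioo (0:ℝ) 1 := ⟨hρ.1, hρ.2.trans hr.2⟩
    refine (h.poh_deriv hρ1).trans ?_
    have hρ2 : ρ ∈ Ico (0:ℝ) 1 := ⟨hρ.1.le, hρ1.2⟩
    have := add_nonneg (h.Nd1_nonneg hρ2) (h.Nd2_nonneg hρ2)
    have := hρ.2.le
    gcongr

end PolarSys

/-- The radial measure with density `N` on `(0, R]`. -/
def nuM (N : ℝ → ℝ) (R : ℝ) : Measure ℝ :=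
  volume.withDensity ((Ioc 0 R).indicator fun ρ => ENNReal.ofReal (N ρ))

lemma nuM_dens_meas {N : ℝ → ℝ} {R : ℝ} (hN : ContinuousOn N (Icc 0 R)) :
    Measurable ((Ioc 0 R).indicator fun ρ => ENNReal.ofReal (N ρ)) := by
  have : ContinuousOn (fun ρ => ENNReal.ofReal (N ρ)) (Ioc 0 R) :=
    ENNReal.continuous_ofReal.comp_continuousOn (hN.mono Ioc_subset_Icc_self)
  have h2 := this.measurable_piecewise (g := fun _ => (0 : ℝ≥0∞)) continuousOn_const
    measurableSet_Ioc
  rw [← piecewise_eq_indicator]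
  exact h2

lemma nuM_lint {N : ℝ → ℝ} {R : ℝ} (hN : ContinuousOn N (Icc 0 R)) (hN0 : ∀ ρ ∈ Icc 0 R, 0 ≤ N ρ)
    {s t : ℝ} (hs : 0 ≤ s) (hst : s ≤ t) (htR : t ≤ R) {φ : ℝ → ℝ} (hφm : Measurable φ)
    (hφc : ContinuousOn φ (Icc s t)) (hφ0 : ∀ ρ ∈ Icc s t, 0 ≤ φ ρ) :
    ENNReal.ofReal (∫ ρ in s..t, φ ρ * N ρ) = ∫⁻ ρ in Ioc s t, ENNReal.ofReal (φ ρ) ∂(nuM N R) := by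
  have hsub : Icc s t ⊆ Icc 0 R := Icc_subset_Icc hs htR
  rw [intervalIntegral.integral_of_le hst, ofReal_integral_eq_lintegral_ofReal]
  · rw [nuM, restrict_withDensity measurableSet_Ioc,
      lintegral_withDensity_eq_lintegral_mul _ (nuM_dens_meas hN) (hφm.ennreal_ofReal)]
    refine setLIntegral_congr_fun measurableSet_Ioc fun ρ hρ => ?_
    have h1 : ρ ∈ Ioc 0 R := ⟨by linarith [hρ.1], by linarith [hρ.2]⟩
    simp only [Pi.mul_apply, indicator_of_mem h1]
    rw [mul_comm, ENNReal.ofReal_mul (hN0 ρ (Ioc_subset_Icc_self h1))]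
  · exact ((hφc.mul (hN.mono hsub)).integrableOn_Icc).mono_set Ioc_subset_Icc_self
  · refine (ae_restrict_iff' measurableSet_Ioc).2 (ae_of_all _ fun ρ hρ => ?_)
    exact mul_nonneg (hφ0 ρ (Ioc_subset_Icc_self hρ)) (hN0 ρ (hsub (Ioc_subset_Icc_self hρ)))

lemma nuM_Ioc {N : ℝ → ℝ} {R : ℝ} (hN : ContinuousOn N (Icc 0 R)) (hN0 : ∀ ρ ∈ Icc 0 R, 0 ≤ N ρ)
    {s t : ℝ} (hs : 0 ≤ s) (hst : s ≤ t) (htR : t ≤ R) :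
    nuM N R (Ioc s t) = ENNReal.ofReal (∫ ρ in s..t, N ρ) := by
  have := nuM_lint hN hN0 hs hst htR (φ := fun _ => 1) measurable_const continuousOn_const
    (fun _ _ => zero_le_one)
  simpa using this.symm

lemma nuM_univ {N : ℝ → ℝ} {R : ℝ} (hR : 0 ≤ R) (hN : ContinuousOn N (Icc 0 R))
    (hN0 : ∀ ρ ∈ Icc 0 R, 0 ≤ N ρ) :
    nuM N R univ = ENNReal.ofReal (∫ ρ in (0:ℝ)..R, N ρ) := by
  rw [← nuM_Ioc hN hN0 le_rfl hR le_rfl, nuM, withDensity_apply _ MeasurableSet.univ,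
    withDensity_apply _ measurableSet_Ioc, Measure.restrict_univ,
    lintegral_indicator measurableSet_Ioc, setLIntegral_indicator measurableSet_Ioc, inter_self]

lemma geom_bd {x : ℝ} (h0 : 0 ≤ x) (h1 : x < 1) (N : ℕ) :
    ∑ n ∈ Finset.range N, x ^ (n + 1) ≤ x / (1 - x) := by
  have := (hasSum_geometric_of_lt_one h0 h1).mul_left x
  have h2 := sum_le_hasSum (Finset.range N) (fun i _ => by positivity) this
  simp only [← pow_succ'] at h2
  rwa [div_eq_mul_inv]

lemma geom_bd2 {x : ℝ} (h0 : 0 ≤ x) (h1 : x ≤ 1 / 2) (N : ℕ) :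
    ∑ n ∈ Finset.range N, ((n : ℝ) + 1) * x ^ (n + 1) ≤ 4 * x := by
  have hx : ‖x‖ < 1 := by rw [Real.norm_eq_abs, abs_of_nonneg h0]; linarith
  have h := hasSum_coe_mul_geometric_of_norm_lt_one hx
  have h2 := sum_le_hasSum (Finset.range (N + 1)) (fun i _ => by positivity) h
  rw [Finset.sum_range_succ'] at h2
  simp only [Nat.cast_add, Nat.cast_one, Nat.cast_zero, zero_mul, add_zero] at h2
  refine h2.trans ?_
  rw [div_le_iff₀ (by nlinarith)]
  nlinarith [mul_nonneg h0 (by linarith : 0 ≤ 1 / 2 - x), mul_nonneg (mul_nonneg h0 (by linarith : 0 ≤ 1 / 2 - x)) (by linarith : 0 ≤ 3 / 2 - x)]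

/-- Kernel. -/
def kerK (r ρ ρ' : ℝ) : ℝ≥0∞ :=
  if 0 < ρ ∧ ρ ≤ r ∧ r < ρ' then ENNReal.ofReal (ρ / (ρ' - ρ)) else 0

lemma sum_prod_le (ν : Measure ℝ) {r R : ℝ} (hr : 0 < r) (N : ℕ) :
    ∑ n ∈ Finset.range N, (∫⁻ ρ in Ioc 0 r, ENNReal.ofReal ((ρ / r) ^ (n + 1)) ∂ν) *
      (∫⁻ ρ' in Ioc r R, ENNReal.ofReal ((r / ρ') ^ (n + 1)) ∂ν) ≤
      ∫⁻ ρ, ∫⁻ ρ', kerK r ρ ρ' ∂ν ∂ν := by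
  have e : ∀ n : ℕ, (∫⁻ ρ in Ioc 0 r, ENNReal.ofReal ((ρ / r) ^ (n + 1)) ∂ν) *
      (∫⁻ ρ' in Ioc r R, ENNReal.ofReal ((r / ρ') ^ (n + 1)) ∂ν) =
      ∫⁻ ρ in Ioc 0 r, ENNReal.ofReal ((ρ / r) ^ (n + 1)) *
      (∫⁻ ρ' in Ioc r R, ENNReal.ofReal ((r / ρ') ^ (n + 1)) ∂ν) ∂ν := fun n =>
    (lintegral_mul_const _ (by fun_prop)).symm
  simp only [e]
  rw [← lintegral_finsetSum _ (fun n _ => by fun_prop), ← lintegral_indicator measurableSet_Ioc]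
  refine lintegral_mono fun ρ => ?_
  by_cases hρ : ρ ∈ Ioc 0 r
  swap
  · rw [indicator_of_notMem hρ]; exact zero_le
  rw [indicator_of_mem hρ]
  have e2 : ∀ n : ℕ, ENNReal.ofReal ((ρ / r) ^ (n + 1)) *
      (∫⁻ ρ' in Ioc r R, ENNReal.ofReal ((r / ρ') ^ (n + 1)) ∂ν) =
      ∫⁻ ρ' in Ioc r R, ENNReal.ofReal ((ρ / r) ^ (n + 1)) *
        ENNReal.ofReal ((r / ρ') ^ (n + 1)) ∂ν := fun n =>
    (lintegral_const_mul _ (by fun_prop)).symm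
  simp only [e2]
  rw [← lintegral_finsetSum _ (fun n _ => by fun_prop), ← lintegral_indicator measurableSet_Ioc]
  refine lintegral_mono fun ρ' => ?_
  by_cases hρ' : ρ' ∈ Ioc r R
  swap
  · rw [indicator_of_notMem hρ']; exact zero_le
  rw [indicator_of_mem hρ', kerK, if_pos ⟨hρ.1, hρ.2, hρ'.1⟩]
  have hp : 0 < ρ' := hr.trans hρ'.1
  have hl : ρ < ρ' := hρ.2.trans_lt hρ'.1
  have e3 : ∀ n : ℕ, ENNReal.ofReal ((ρ / r) ^ (n + 1)) * ENNReal.ofReal ((r / ρ') ^ (n + 1)) =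
      ENNReal.ofReal ((ρ / ρ') ^ (n + 1)) := by
    intro n
    have := hρ.1
    rw [← ENNReal.ofReal_mul (by positivity), ← mul_pow]
    congr 2
    field_simp
  simp only [e3]
  rw [← ENNReal.ofReal_sum_of_nonneg (fun n _ => by have := hρ.1; positivity)]
  refine ENNReal.ofReal_le_ofReal ?_
  refine (geom_bd (div_nonneg hρ.1.le hp.le) ((div_lt_one hp).2 hl) N).trans (le_of_eq ?_)
  have : ρ' - ρ ≠ 0 := by linarith
  have h2 : 1 - ρ / ρ' ≠ 0 := by
    have := (div_lt_one hp).2 hl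
    linarith
  field_simp

namespace PolarSys

variable {C : ℝ} {V a b ar aθ br bθ f1 f2 f1r f2r : ℝ → ℝ → ℝ}

lemma Nc (h : PolarSys C V a b ar aθ br bθ f1 f2 f1r f2r) {R : ℝ} (hR : R < 1) :
    ContinuousOn (fun ρ => Nd f1 ρ + Nd f2 ρ) (Icc 0 R) :=
  ((Nd_cont f1 h.cf1).add (Nd_cont f2 h.cf2)).mono (Icc_sub hR)

lemma N0 (h : PolarSys C V a b ar aθ br bθ f1 f2 f1r f2r) {R : ℝ} (hR : R < 1) :
    ∀ ρ ∈ Icc 0 R, 0 ≤ Nd f1 ρ + Nd f2 ρ := fun ρ hρ =>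
  add_nonneg (h.Nd1_nonneg ⟨hρ.1, by linarith [hρ.2]⟩) (h.Nd2_nonneg ⟨hρ.1, by linarith [hρ.2]⟩)

lemma Md_sub (h : PolarSys C V a b ar aθ br bθ f1 f2 f1r f2r) {s t : ℝ} (hs : 0 ≤ s)
    (hst : s ≤ t) (ht : t < 1) :
    ∫ ρ in s..t, (Nd f1 ρ + Nd f2 ρ) = (Md f1 t + Md f2 t) - (Md f1 s + Md f2 s) := by
  have i1 := Nd_ii f1 h.cf1 le_rfl hs (hst.trans_lt ht)
  have i2 := Nd_ii f2 h.cf2 le_rfl hs (hst.trans_lt ht)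
  have j1 := Nd_ii f1 h.cf1 hs hst ht
  have j2 := Nd_ii f2 h.cf2 hs hst ht
  rw [intervalIntegral.integral_add j1 j2]
  simp only [Md]
  rw [← intervalIntegral.integral_add_adjacent_intervals i1 j1,
    ← intervalIntegral.integral_add_adjacent_intervals i2 j2]
  ring

lemma Md1_mono (h : PolarSys C V a b ar aθ br bθ f1 f2 f1r f2r) {s t : ℝ} (hs : 0 ≤ s)
    (hst : s ≤ t) (ht : t < 1) : Md f1 s ≤ Md f1 t := by
  have i1 := Nd_ii f1 h.cf1 le_rfl hs (hst.trans_lt ht)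
  have j1 := Nd_ii f1 h.cf1 hs hst ht
  simp only [Md]
  rw [← intervalIntegral.integral_add_adjacent_intervals i1 j1]
  have := intervalIntegral.integral_nonneg hst (f := Nd f1) (μ := volume)
    (fun ρ hρ => h.Nd1_nonneg ⟨by linarith [hρ.1], by linarith [hρ.2]⟩)
  linarith

lemma Md2_mono (h : PolarSys C V a b ar aθ br bθ f1 f2 f1r f2r) {s t : ℝ} (hs : 0 ≤ s)
    (hst : s ≤ t) (ht : t < 1) : Md f2 s ≤ Md f2 t := by
  have i1 := Nd_ii f2 h.cf2 le_rfl hs (hst.trans_lt ht)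
  have j1 := Nd_ii f2 h.cf2 hs hst ht
  simp only [Md]
  rw [← intervalIntegral.integral_add_adjacent_intervals i1 j1]
  have := intervalIntegral.integral_nonneg hst (f := Nd f2) (μ := volume)
    (fun ρ hρ => h.Nd2_nonneg ⟨by linarith [hρ.1], by linarith [hρ.2]⟩)
  linarith

lemma sum_le (h : PolarSys C V a b ar aθ br bθ f1 f2 f1r f2r) {r R CV : ℝ} (hr : 0 < r)
    (hrR : r ≤ R / 2) (hR : R < 1) (hV : ∀ θ, |V R θ| ≤ CV) (N : ℕ) :
    ∑ n ∈ Finset.range N, ENNReal.ofReal (‖fc ((n:ℤ)+1) (Fd a b r)‖ * ‖fc (-((n:ℤ)+1)) (Fd a b r)‖)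
    ≤ (∫⁻ ρ, ∫⁻ ρ', kerK r ρ ρ' ∂(nuM (fun ρ => Nd f1 ρ + Nd f2 ρ) R)
        ∂(nuM (fun ρ => Nd f1 ρ + Nd f2 ρ) R)) +
      ENNReal.ofReal ((Md f1 R + Md f2 R) * ((Md f1 R + Md f2 R) + 4 * Real.pi * CV) *
        (4 * (r / R))) := by
  have hR0 : 0 < R := by linarith
  have hrR' : r < R := by linarith
  have hr1 : r ∈ Ioo (0:ℝ) 1 := ⟨hr, by linarith⟩
  set ν := nuM (fun ρ => Nd f1 ρ + Nd f2 ρ) R with hν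
  have CV0 : 0 ≤ CV := (abs_nonneg _).trans (hV 0)
  set M := Md f1 R + Md f2 R with hM
  have Mz : Md f1 0 + Md f2 0 = 0 := by simp [Md]
  have Mr0 : 0 ≤ Md f1 r + Md f2 r := by
    linarith [h.Md1_mono le_rfl hr.le hr1.2, h.Md2_mono le_rfl hr.le hr1.2]
  have MrM : Md f1 r + Md f2 r ≤ M := by
    linarith [h.Md1_mono hr.le hrR'.le hR, h.Md2_mono hr.le hrR'.le hR]
  have M0 : 0 ≤ M := Mr0.trans MrM
  have hpi := Real.pi_pos
  have term : ∀ n : ℕ, ENNReal.ofReal (‖fc ((n:ℤ)+1) (Fd a b r)‖ * ‖fc (-((n:ℤ)+1)) (Fd a b r)‖) ≤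
      (∫⁻ ρ in Ioc 0 r, ENNReal.ofReal ((ρ / r) ^ (n + 1)) ∂ν) *
      (∫⁻ ρ' in Ioc r R, ENNReal.ofReal ((r / ρ') ^ (n + 1)) ∂ν) +
      ENNReal.ofReal (M * (M + 4 * Real.pi * CV) * (((n : ℝ) + 1) * (r / R) ^ (n + 1))) := by
    intro n
    have A1 := h.c_neg_le (n + 1) hr1
    have A2 := h.c_neg_le' (n + 1) hr1
    have B1 := h.c_pos_le (n + 1) hr hrR' hR
    have B2 := h.c_R_le (n + 1) ⟨hR0, hR⟩ hV
    push_cast at A1 A2 B1 B2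
    set A := ‖fc (-((n:ℤ)+1)) (Fd a b r)‖
    set B := ‖fc ((n:ℤ)+1) (Fd a b r)‖
    set I1 := ∫ ρ in (0:ℝ)..r, (ρ / r) ^ (n + 1) * (Nd f1 ρ + Nd f2 ρ) with hI1
    set I2 := ∫ ρ in r..R, (r / ρ) ^ (n + 1) * (Nd f1 ρ + Nd f2 ρ) with hI2
    have E1 : ENNReal.ofReal I1 = _ := nuM_lint (h.Nc hR) (h.N0 hR) le_rfl hr.le hrR'.le
      (φ := fun ρ => (ρ / r) ^ (n + 1)) (by fun_prop) (by fun_prop)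
      (fun ρ hρ => by have := hρ.1; positivity)
    have E2 : ENNReal.ofReal I2 = _ := nuM_lint (h.Nc hR) (h.N0 hR) hr.le hrR'.le le_rfl
      (φ := fun ρ => (r / ρ) ^ (n + 1)) (by fun_prop)
      (ContinuousOn.pow (continuousOn_const.div continuousOn_id
        (fun ρ hρ => by have := hρ.1; simp; linarith)) _)
      (fun ρ hρ => by have := hr.le.trans hρ.1; positivity)
    rw [← E1, ← E2]
    have I10 : 0 ≤ I1 := (norm_nonneg _).trans A1
    have I20 : 0 ≤ I2 := by
      refine intervalIntegral.integral_nonneg hrR'.le fun ρ hρ => ?_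
      have h1 := hr.le.trans hρ.1
      exact mul_nonneg (by positivity) (h.N0 hR ρ ⟨h1, hρ.2⟩)
    have xx : 0 ≤ (r / R) ^ (n + 1) := by positivity
    rw [← ENNReal.ofReal_mul I10, ← ENNReal.ofReal_add (by positivity) (by positivity)]
    refine ENNReal.ofReal_le_ofReal ?_
    have hA0 : 0 ≤ A := norm_nonneg _
    have h3 : ‖fc ((n:ℤ)+1) (Fd a b R)‖ ≤ (M + 4 * Real.pi * CV) * ((n : ℝ) + 1) := by
      refine B2.trans ?_
      have : 0 ≤ M * n := by positivity
      nlinarith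
    calc B * A ≤ ((r / R) ^ (n + 1) * ‖fc ((n:ℤ)+1) (Fd a b R)‖ + I2) * A :=
          mul_le_mul_of_nonneg_right B1 hA0
      _ = A * I2 + (r / R) ^ (n + 1) * ‖fc ((n:ℤ)+1) (Fd a b R)‖ * A := by ring
      _ ≤ I1 * I2 + (r / R) ^ (n + 1) * ((M + 4 * Real.pi * CV) * ((n : ℝ) + 1)) * M := by
          gcongr
          exact A2.trans MrM
      _ = _ := by ring
  refine (Finset.sum_le_sum fun n _ => term n).trans ?_
  rw [Finset.sum_add_distrib]
  refine add_le_add (sum_prod_le ν hr N) ?_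
  rw [← ENNReal.ofReal_sum_of_nonneg (fun n _ => by positivity), ← Finset.mul_sum]
  refine ENNReal.ofReal_le_ofReal ?_
  refine mul_le_mul_of_nonneg_left (geom_bd2 (by positivity) ?_ N) (by positivity)
  rw [div_le_iff₀ hR0]; linarith

end PolarSys

lemma D_diff {x1 x2 y1 y2 M m : ℝ} (hx1 : 0 ≤ x1) (hx2 : 0 ≤ x2) (e1 : x1 ≤ y1) (e2 : x2 ≤ y2)
    (hM : y1 + y2 ≤ M) (hm : (y1 + y2) - (x1 + x2) ≤ m) :
    |(x1 - x2) ^ 2 / (4 * Real.pi) - 2 * (x1 + x2)| - (M + 2) * m ≤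
      |(y1 - y2) ^ 2 / (4 * Real.pi) - 2 * (y1 + y2)| := by
  have hpi := Real.pi_gt_three
  have M0 : 0 ≤ M := by linarith
  have m0 : 0 ≤ m := by linarith
  have t := abs_sub_abs_le_abs_sub ((x1 - x2) ^ 2 / (4 * Real.pi) - 2 * (x1 + x2))
    ((y1 - y2) ^ 2 / (4 * Real.pi) - 2 * (y1 + y2))
  have t2 : |((x1 - x2) ^ 2 / (4 * Real.pi) - 2 * (x1 + x2)) -
      ((y1 - y2) ^ 2 / (4 * Real.pi) - 2 * (y1 + y2))| ≤ (M + 2) * m := by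
    have e : ((x1 - x2) ^ 2 / (4 * Real.pi) - 2 * (x1 + x2)) -
      ((y1 - y2) ^ 2 / (4 * Real.pi) - 2 * (y1 + y2)) =
      ((x1 - x2) + (y1 - y2)) * ((x1 - x2) - (y1 - y2)) /
        (4 * Real.pi) + 2 * ((y1 + y2) - (x1 + x2)) := by
      field_simp
      ring
    rw [e]
    refine (abs_add_le _ _).trans ?_
    have u1 : |2 * ((y1 + y2) - (x1 + x2))| ≤ 2 * m := by
      rw [abs_of_nonneg (by linarith)]; linarith
    have u2 : |((x1 - x2) + (y1 - y2)) * ((x1 - x2) - (y1 - y2)) / (4 * Real.pi)| ≤ M * m := by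
      rw [abs_div, abs_mul, abs_of_pos (by positivity : 0 < 4 * Real.pi)]
      rw [div_le_iff₀ (by positivity)]
      have v1 : |(x1 - x2) + (y1 - y2)| ≤ 2 * M := by
        rw [abs_le]; constructor <;> linarith
      have v2 : |(x1 - x2) - (y1 - y2)| ≤ m := by
        rw [abs_le]; constructor <;> linarith
      calc _ ≤ 2 * M * m := by gcongr
        _ ≤ M * m * (4 * Real.pi) := by nlinarith [mul_nonneg M0 m0]
    linarith
  linarith


namespace PolarSys

variable {C : ℝ} {V a b ar aθ br bθ f1 f2 f1r f2r : ℝ → ℝ → ℝ}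

lemma D_le (h : PolarSys C V a b ar aθ br bθ f1 f2 f1r f2r) (hC : 0 ≤ C) {r R CV : ℝ} (hr : 0 < r)
    (hrR : r ≤ R / 2) (hR : R < 1) (hV : ∀ θ, |V R θ| ≤ CV) :
    ENNReal.ofReal |(Md f1 r - Md f2 r) ^ 2 / (4 * Real.pi) - 2 * (Md f1 r + Md f2 r)| ≤
      ENNReal.ofReal (C * r * (Md f1 r + Md f2 r) +
        (Md f1 R + Md f2 R) * ((Md f1 R + Md f2 R) + 4 * Real.pi * CV) * (4 * (r / R))) +
      (ENNReal.ofReal (r * (Nd f1 r + Nd f2 r)) +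
      ∫⁻ ρ, ∫⁻ ρ', kerK r ρ ρ' ∂(nuM (fun ρ => Nd f1 ρ + Nd f2 ρ) R)
        ∂(nuM (fun ρ => Nd f1 ρ + Nd f2 ρ) R)) := by
  have hR0 : 0 < R := by linarith
  have hr1 : r ∈ Ioo (0:ℝ) 1 := ⟨hr, by linarith⟩
  have hr' : r ∈ Ioo (-1:ℝ) 1 := ⟨by linarith, by linarith⟩
  have ca := slice_cont a h.ca hr'
  have cb := slice_cont b h.cb hr'
  have P := parseval_bound (a r) (b r) ca cb _ (h.sum_le hr hrR hR hV)
  have c0 : fc 0 (fun θ => (a r θ : ℂ) - Complex.I * b r θ) = ((-(Md f1 r - Md f2 r) : ℝ) : ℂ) :=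
    h.c_zero_eq hr1
  rw [c0, ← Complex.ofReal_pow, Complex.ofReal_re] at P
  have Q := h.poh hC hr1
  have CV0 : 0 ≤ CV := (abs_nonneg _).trans (hV 0)
  have Mz : Md f1 0 + Md f2 0 = 0 := by simp [Md]
  have Mr0 : 0 ≤ Md f1 r + Md f2 r := by
    linarith [h.Md1_mono le_rfl hr.le hr1.2, h.Md2_mono le_rfl hr.le hr1.2]
  have M0 : 0 ≤ Md f1 R + Md f2 R := by
    linarith [h.Md1_mono le_rfl hR0.le hR, h.Md2_mono le_rfl hR0.le hR]
  have hN := h.N0 hr1.2 r ⟨hr.le, le_rfl⟩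
  have hpi := Real.pi_pos
  set J := ∫ θ in (0:ℝ)..(2 * Real.pi), (a r θ ^ 2 - b r θ ^ 2)
  set K := ∫⁻ ρ, ∫⁻ ρ', kerK r ρ ρ' ∂(nuM (fun ρ => Nd f1 ρ + Nd f2 ρ) R)
        ∂(nuM (fun ρ => Nd f1 ρ + Nd f2 ρ) R)
  set bd := (Md f1 R + Md f2 R) * ((Md f1 R + Md f2 R) + 4 * Real.pi * CV) * (4 * (r / R)) with hbd
  have bd0 : 0 ≤ bd := by positivity
  set Y := |2 * Real.pi * J - (-(Md f1 r - Md f2 r)) ^ 2|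
  have hY : ENNReal.ofReal (Y / 2) ≤ K + ENNReal.ofReal bd := by
    rw [ENNReal.ofReal_div_of_pos (by norm_num), ENNReal.ofReal_ofNat]
    refine ENNReal.div_le_of_le_mul ?_
    rwa [mul_comm]
  have hY0 : 0 ≤ Y := abs_nonneg _
  have key : |(Md f1 r - Md f2 r) ^ 2 / (4 * Real.pi) - 2 * (Md f1 r + Md f2 r)| ≤
      C * r * (Md f1 r + Md f2 r) + (r * (Nd f1 r + Nd f2 r) + Y / 2) := by
    have e : (Md f1 r - Md f2 r) ^ 2 / (4 * Real.pi) - 2 * (Md f1 r + Md f2 r) =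
      (2⁻¹ * J + r * (Nd f1 r + Nd f2 r) - 2 * (Md f1 r + Md f2 r)) - r * (Nd f1 r + Nd f2 r) -
        (2 * Real.pi * J - (-(Md f1 r - Md f2 r)) ^ 2) / (4 * Real.pi) := by
      field_simp
      ring
    rw [e]
    refine (abs_sub _ _).trans ?_
    have h1 := (abs_sub (2⁻¹ * J + r * (Nd f1 r + Nd f2 r) - 2 * (Md f1 r + Md f2 r))
      (r * (Nd f1 r + Nd f2 r)))
    rw [abs_of_nonneg (mul_nonneg hr.le hN)] at h1
    have h2 : |(2 * Real.pi * J - (-(Md f1 r - Md f2 r)) ^ 2) / (4 * Real.pi)| ≤ Y / 2 := by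
      rw [abs_div, abs_of_pos (by positivity : 0 < 4 * Real.pi)]
      have := Real.pi_gt_three
      exact div_le_div_of_nonneg_left hY0 (by norm_num) (by linarith)
    linarith
  refine (ENNReal.ofReal_le_ofReal key).trans ?_
  rw [ENNReal.ofReal_add (by positivity) (by positivity), ENNReal.ofReal_add (by positivity)
    (by positivity), ENNReal.ofReal_add (by positivity) bd0]
  calc _ ≤ ENNReal.ofReal (C * r * (Md f1 r + Md f2 r)) +
      (ENNReal.ofReal (r * (Nd f1 r + Nd f2 r)) + (K + ENNReal.ofReal bd)) := by gcongr
    _ = _ := by ring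

set_option maxHeartbeats 1000000 in
lemma main_est (h : PolarSys C V a b ar aθ br bθ f1 f2 f1r f2r) (hC : 0 ≤ C) {s L R CV : ℝ}
    (hs : 0 < s) (hL : 1 < L) (hsR : 2 * s * L ≤ R / 2) (hR : R < 1) (hV : ∀ θ, |V R θ| ≤ CV) :
    |(Md f1 s - Md f2 s) ^ 2 / (4 * Real.pi) - 2 * (Md f1 s + Md f2 s)| ≤
      ((Md f1 R + Md f2 R) + 4) * ((Md f1 (2 * s) + Md f2 (2 * s)) - (Md f1 s + Md f2 s)) +
      2 * ((Md f1 (2 * s * L) + Md f2 (2 * s * L)) - (Md f1 (s / L) + Md f2 (s / L))) ^ 2 +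
      (Md f1 R + Md f2 R) ^ 2 / (L - 1) +
      s * (2 * C * (Md f1 R + Md f2 R) +
        (Md f1 R + Md f2 R) * ((Md f1 R + Md f2 R) + 4 * Real.pi * CV) * (8 / R)) := by
  have hL0 : 0 < L := by linarith
  have hsL : 2 * s < 2 * s * L := by nlinarith
  have hsL' : s / L < s := div_lt_self hs hL
  have hsL0 : 0 < s / L := by positivity
  have hR0 : 0 < R := by linarith
  have CV0 : 0 ≤ CV := (abs_nonneg _).trans (hV 0)
  have hpi := Real.pi_gt_three
  have Mz1 : Md f1 0 = 0 := by simp [Md]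
  have Mz2 : Md f2 0 = 0 := by simp [Md]
  have a1 := h.Md1_mono le_rfl hs.le (by linarith)
  have a2 := h.Md2_mono le_rfl hs.le (by linarith)
  have b1 := h.Md1_mono hs.le (by linarith : s ≤ 2 * s) (by linarith)
  have b2 := h.Md2_mono hs.le (by linarith : s ≤ 2 * s) (by linarith)
  have c1 := h.Md1_mono (by linarith) (by linarith : 2 * s ≤ R) (by linarith)
  have c2 := h.Md2_mono (by linarith) (by linarith : 2 * s ≤ R) (by linarith)
  have d1 := h.Md1_mono hsL0.le (by linarith : s / L ≤ 2 * s * L) (by linarith)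
  have d2 := h.Md2_mono hsL0.le (by linarith : s / L ≤ 2 * s * L) (by linarith)
  set M := Md f1 R + Md f2 R with hM
  set m := (Md f1 (2 * s) + Md f2 (2 * s)) - (Md f1 s + Md f2 s) with hm
  set w := (Md f1 (2 * s * L) + Md f2 (2 * s * L)) - (Md f1 (s / L) + Md f2 (s / L)) with hw
  have M0 : 0 ≤ M := by linarith
  have m0 : 0 ≤ m := by linarith
  have w0 : 0 ≤ w := by linarith
  set ν := nuM (fun ρ => Nd f1 ρ + Nd f2 ρ) R with hν
  set D := |(Md f1 s - Md f2 s) ^ 2 / (4 * Real.pi) - 2 * (Md f1 s + Md f2 s)| with hD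
  set E := C * (2 * s) * M + M * (M + 4 * Real.pi * CV) * (4 * (2 * s / R)) with hE
  have E0 : 0 ≤ E := by positivity
  have univ_eq : ν univ = ENNReal.ofReal M := by
    rw [hν, nuM_univ hR0.le (h.Nc hR) (h.N0 hR), h.Md_sub le_rfl hR0.le hR, Mz1, Mz2]
    simp [hM]
  have Ioc_eq : ν (Ioc (s / L) (2 * s * L)) = ENNReal.ofReal w := by
    rw [hν, nuM_Ioc (h.Nc hR) (h.N0 hR) hsL0.le (by linarith) (by linarith),
      h.Md_sub hsL0.le (by linarith) (by linarith)]
  have : IsFiniteMeasure ν := ⟨by rw [univ_eq]; exact ENNReal.ofReal_lt_top⟩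
  have T := tonelli_bound ν s L hs hL
  rw [univ_eq, Ioc_eq] at T
  have pt : ∀ r ∈ Ioc s (2 * s), ENNReal.ofReal (D - (M + 2) * m) ≤
      ENNReal.ofReal E + (ENNReal.ofReal (2 * s) * ENNReal.ofReal (Nd f1 r + Nd f2 r) +
        ∫⁻ ρ, ∫⁻ ρ', kerK r ρ ρ' ∂ν ∂ν) := by
    intro r hr
    have hr0 : 0 < r := hs.trans hr.1
    have e1 := h.Md1_mono hs.le hr.1.le (by linarith [hr.2])
    have e2 := h.Md2_mono hs.le hr.1.le (by linarith [hr.2])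
    have g1 := h.Md1_mono hr0.le hr.2 (by linarith [hr.2])
    have g2 := h.Md2_mono hr0.le hr.2 (by linarith [hr.2])
    have hN := h.N0 (by linarith : 2 * s < 1) r ⟨hr0.le, hr.2⟩
    have hDr : D - (M + 2) * m ≤
        |(Md f1 r - Md f2 r) ^ 2 / (4 * Real.pi) - 2 * (Md f1 r + Md f2 r)| := by
      exact D_diff (by linarith) (by linarith) e1 e2 (by linarith) (by linarith)
    refine (ENNReal.ofReal_le_ofReal hDr).trans ((h.D_le hC hr0 (by linarith [hr.2]) hR hV).trans ?_)
    have hr2 := hr.2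
    refine add_le_add ?_ (add_le_add ?_ le_rfl)
    · refine ENNReal.ofReal_le_ofReal ?_
      rw [hE]
      have : 0 ≤ Md f1 r + Md f2 r := by linarith
      gcongr
      linarith
    · rw [← ENNReal.ofReal_mul (by linarith)]
      refine ENNReal.ofReal_le_ofReal ?_
      gcongr
  have I := setLIntegral_mono' (μ := volume) measurableSet_Ioc pt
  have hcN : ContinuousOn (fun ρ => Nd f1 ρ + Nd f2 ρ) (Ioc s (2 * s)) :=
    (h.Nc (by linarith : 2 * s < 1)).mono fun x hx => ⟨by linarith [hx.1], hx.2⟩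
  have hmN : AEMeasurable (fun r => ENNReal.ofReal (Nd f1 r + Nd f2 r))
    (volume.restrict (Ioc s (2 * s))) := (hcN.aemeasurable measurableSet_Ioc).ennreal_ofReal
  have hIN : ∫⁻ r in Ioc s (2 * s), ENNReal.ofReal (Nd f1 r + Nd f2 r) = ENNReal.ofReal m := by
    rw [hm, ← h.Md_sub hs.le (by linarith) (by linarith),
      intervalIntegral.integral_of_le (by linarith), ofReal_integral_eq_lintegral_ofReal]
    · exact ((h.Nc (by linarith : 2 * s < 1)).mono (fun x hx => ⟨by linarith [hx.1], hx.2⟩)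
        : ContinuousOn _ (Icc s (2 * s))).integrableOn_Icc.mono_set Ioc_subset_Icc_self
    · refine (ae_restrict_iff' measurableSet_Ioc).2 (ae_of_all _ fun ρ hρ => ?_)
      exact h.N0 (by linarith : 2 * s < 1) ρ ⟨by linarith [hρ.1], hρ.2⟩
  rw [lintegral_add_left measurable_const, lintegral_add_left' (hmN.const_mul _),
    lintegral_const_mul'' _ hmN, hIN, setLIntegral_const, setLIntegral_const, Real.volume_Ioc] at I
  have I2 := I.trans (add_le_add le_rfl (add_le_add le_rfl T))
  have hL1 : 0 < L - 1 := by linarith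
  rw [← ENNReal.ofReal_mul' (by linarith), ← ENNReal.ofReal_mul' (by linarith),
    ← ENNReal.ofReal_mul (by linarith), ← ENNReal.ofReal_pow w0, ← ENNReal.ofReal_pow M0,
    ← ENNReal.ofReal_mul (by linarith), ← ENNReal.ofReal_mul (by positivity),
    ← ENNReal.ofReal_add (by positivity) (by positivity),
    ← ENNReal.ofReal_add (by positivity) (by positivity),
    ← ENNReal.ofReal_add (mul_nonneg E0 (by linarith)) (by positivity),
    ENNReal.ofReal_le_ofReal_iff] at I2
  · have I3 : s * (D - (M + 2) * m) ≤ s * (E + 2 * m + 2 * w ^ 2 + M ^ 2 / (L - 1)) := by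
      calc s * (D - (M + 2) * m) = (D - (M + 2) * m) * (2 * s - s) := by ring
        _ ≤ _ := I2
        _ = _ := by ring
    have I4 := le_of_mul_le_mul_left I3 hs
    have : E = s * (2 * C * M + M * (M + 4 * Real.pi * CV) * (8 / R)) := by rw [hE]; ring
    rw [this] at I4
    linarith
  · have := mul_nonneg E0 (by linarith : 0 ≤ 2 * s - s)
    positivity

end PolarSys

/-- Partial derivative. -/
def pd (i : Fin 2) (g : E2 → ℝ) (x : E2) : ℝ := fderiv ℝ g x (EuclideanSpace.single i 1)

lemma circ_lin (r θ : ℝ) : circ r θ = (r * Real.cos θ) • (EuclideanSpace.single 0 1 : E2) +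
    (r * Real.sin θ) • (EuclideanSpace.single 1 1 : E2) := by
  ext i
  fin_cases i <;> simp [circ]

lemma fderiv_lin (g : E2 → ℝ) (x : E2) (s t : ℝ) :
    fderiv ℝ g x (s • (EuclideanSpace.single 0 1 : E2) + t • (EuclideanSpace.single 1 1 : E2)) =
      s * pd 0 g x + t * pd 1 g x := by
  simp [pd]

lemma hasDeriv_r {g : E2 → ℝ} {r θ : ℝ} (hg : DifferentiableAt ℝ g (circ r θ)) :
    HasDerivAt (fun r => g (circ r θ)) (Real.cos θ * pd 0 g (circ r θ) +
      Real.sin θ * pd 1 g (circ r θ)) r := by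
  have h1 : HasDerivAt (fun r => circ r θ) (Real.cos θ • (EuclideanSpace.single 0 1 : E2) +
      Real.sin θ • (EuclideanSpace.single 1 1 : E2)) r := by
    simp only [circ_lin]
    have h2 := (((hasDerivAt_id r).mul_const (Real.cos θ)).smul_const
      (EuclideanSpace.single 0 1 : E2)).add (((hasDerivAt_id r).mul_const (Real.sin θ)).smul_const
      (EuclideanSpace.single 1 1 : E2))
    refine HasDerivAt.congr_deriv h2 ?_
    simp
  refine (hg.hasFDerivAt.comp_hasDerivAt r h1).congr_deriv ?_
  rw [fderiv_lin]

lemma hasDeriv_θ {g : E2 → ℝ} {r θ : ℝ} (hg : DifferentiableAt ℝ g (circ r θ)) :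
    HasDerivAt (fun θ => g (circ r θ)) (-(r * Real.sin θ) * pd 0 g (circ r θ) +
      r * Real.cos θ * pd 1 g (circ r θ)) θ := by
  have h1 : HasDerivAt (fun θ => circ r θ) ((-(r * Real.sin θ)) • (EuclideanSpace.single 0 1 : E2) +
      (r * Real.cos θ) • (EuclideanSpace.single 1 1 : E2)) θ := by
    simp only [circ_lin]
    have h2 := (((Real.hasDerivAt_cos θ).const_mul r).smul_const
      (EuclideanSpace.single 0 1 : E2)).add (((Real.hasDerivAt_sin θ).const_mul r).smul_const
      (EuclideanSpace.single 1 1 : E2))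
    refine HasDerivAt.congr_deriv h2 ?_
    simp
  refine (hg.hasFDerivAt.comp_hasDerivAt θ h1).congr_deriv ?_
  rw [fderiv_lin]

lemma pd_cd {g : E2 → ℝ} {m n : WithTop ℕ∞} (hg : ContDiffOn ℝ n g (ball 0 1)) (hmn : m + 1 ≤ n)
    (i : Fin 2) : ContDiffOn ℝ m (pd i g) (ball 0 1) :=
  (hg.fderiv_of_isOpen isOpen_ball hmn).clm_apply contDiffOn_const

lemma cyl_comp {g : E2 → ℝ} (hg : ContinuousOn g (ball 0 1)) :
    ContinuousOn (fun p : ℝ × ℝ => g (circ p.1 p.2)) cyl :=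
  hg.comp circ_cont.continuousOn fun p hp => circ_mem hp.1 p.2

lemma pd_bound {g : E2 → ℝ} {C r θ : ℝ} (hr : r ∈ Ioo (-1:ℝ) 1)
    (hb : ‖iteratedFDerivWithin ℝ 1 g (ball 0 1) (circ r θ)‖ ≤ C) :
    |Real.cos θ * pd 0 g (circ r θ) + Real.sin θ * pd 1 g (circ r θ)| ≤ C := by
  have hx := circ_mem hr θ
  rw [norm_iteratedFDerivWithin_one _ (isOpen_ball.uniqueDiffWithinAt hx),
    fderivWithin_of_isOpen isOpen_ball hx] at hb
  rw [← fderiv_lin]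
  have h1 := (fderiv ℝ g (circ r θ)).le_opNorm (circ 1 θ)
  rw [circ_norm, abs_one, mul_one, circ_lin 1 θ, one_mul, one_mul] at h1
  exact h1.trans hb

lemma mixed {u : E2 → ℝ} (hu : ContDiffOn ℝ 2 u (ball 0 1)) {x : E2} (hx : x ∈ ball (0:E2) 1) :
    pd 1 (pd 0 u) x = pd 0 (pd 1 u) x := by
  have hat := hu.contDiffAt (isOpen_ball.mem_nhds hx)
  have hs : IsSymmSndFDerivAt ℝ u x := hat.isSymmSndFDerivAt (by simp)
  have hd : DifferentiableAt ℝ (fderiv ℝ u) x :=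
    ((hu.fderiv_of_isOpen isOpen_ball (m := 1) (by norm_num)).contDiffAt
      (isOpen_ball.mem_nhds hx)).differentiableAt (by norm_num)
  have e : ∀ i j : Fin 2, pd i (pd j u) x = fderiv ℝ (fderiv ℝ u) x (EuclideanSpace.single i 1)
      (EuclideanSpace.single j 1) := by
    intro i j
    unfold pd
    rw [fderiv_clm_apply hd (by fun_prop)]
    simp
  rw [e, e, hs]

lemma poh_aux {g : ℝ} {C r h E : ℝ} (hC : 0 < C) (hr : 0 < r) (hE : 0 < E) (hg : |g| ≤ C)
    (hh : C⁻¹ ≤ h) : |r * (g * E)| ≤ C ^ 2 * r * (h * E) := by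
  rw [abs_mul, abs_mul, abs_of_pos hr, abs_of_pos hE]
  have : C ≤ C ^ 2 * h := by
    calc C = C ^ 2 * C⁻¹ := by field_simp
      _ ≤ _ := by gcongr
  calc r * (|g| * E) ≤ r * ((C ^ 2 * h) * E) := by gcongr; exact hg.trans this
    _ = _ := by ring

set_option maxHeartbeats 4000000 in
lemma polarSys_of {u h1 h2 : E2 → ℝ} {C : ℝ} (hC : 0 < C) (hu : ContDiffOn ℝ 2 u (ball 0 1))
    (heq : ∀ x ∈ ball (0:E2) 1, lap u x + h1 x * Real.exp (u x) - h2 x * Real.exp (-(u x)) = 0)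
    (hh1 : ContDiffOn ℝ 3 h1 (ball 0 1)) (hh2 : ContDiffOn ℝ 3 h2 (ball 0 1))
    (hl1 : ∀ x ∈ ball (0:E2) 1, C⁻¹ ≤ h1 x) (hl2 : ∀ x ∈ ball (0:E2) 1, C⁻¹ ≤ h2 x)
    (hb1 : ∀ x ∈ ball (0:E2) 1, ‖iteratedFDerivWithin ℝ 1 h1 (ball 0 1) x‖ ≤ C)
    (hb2 : ∀ x ∈ ball (0:E2) 1, ‖iteratedFDerivWithin ℝ 1 h2 (ball 0 1) x‖ ≤ C) :
    ∃ a b ar aθ br bθ f1r f2r : ℝ → ℝ → ℝ,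
      PolarSys (C ^ 2) (fun r θ => u (circ r θ)) a b ar aθ br bθ
        (fun r θ => h1 (circ r θ) * Real.exp (u (circ r θ)))
        (fun r θ => h2 (circ r θ) * Real.exp (-(u (circ r θ)))) f1r f2r := by
  have hp : ∀ i, ContDiffOn ℝ 1 (pd i u) (ball 0 1) := pd_cd hu (by norm_num)
  have hpp : ∀ i j, ContinuousOn (pd i (pd j u)) (ball 0 1) := fun i j =>
    (pd_cd (m := 0) (hp j) (by norm_num) i).continuousOn
  have ph1 : ∀ i, ContinuousOn (pd i h1) (ball 0 1) := fun i =>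
    (pd_cd (m := 2) hh1 (by norm_num) i).continuousOn
  have ph2 : ∀ i, ContinuousOn (pd i h2) (ball 0 1) := fun i =>
    (pd_cd (m := 2) hh2 (by norm_num) i).continuousOn
  have dif : ∀ {g : E2 → ℝ} {n : WithTop ℕ∞}, ContDiffOn ℝ n g (ball 0 1) → n ≠ 0 →
      ∀ {r : ℝ}, r ∈ Ioo (-1:ℝ) 1 → ∀ θ, DifferentiableAt ℝ g (circ r θ) :=
    fun hg hn r hr θ => (hg.contDiffAt (isOpen_ball.mem_nhds (circ_mem hr θ))).differentiableAt hn
  have Cu := cyl_comp hu.continuousOn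
  have C1 := cyl_comp hh1.continuousOn
  have C2 := cyl_comp hh2.continuousOn
  have Cp := fun i => cyl_comp (hp i).continuousOn
  have Cpp := fun i j => cyl_comp (hpp i j)
  have Ch1 := fun i => cyl_comp (ph1 i)
  have Ch2 := fun i => cyl_comp (ph2 i)
  have P0 := Cp 0
  have P1 := Cp 1
  have P00 := Cpp 0 0
  have P01 := Cpp 0 1
  have P10 := Cpp 1 0
  have P11 := Cpp 1 1
  have H10 := Ch1 0
  have H11 := Ch1 1
  have H20 := Ch2 0
  have H21 := Ch2 1
  have CE := Real.continuous_exp.comp_continuousOn Cu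
  have CE2 := Real.continuous_exp.comp_continuousOn Cu.neg
  have A0 : ContinuousOn (fun p : ℝ × ℝ => Real.cos p.2 * pd 0 u (circ p.1 p.2) +
    Real.sin p.2 * pd 1 u (circ p.1 p.2)) cyl := by fun_prop
  have A1 : ContinuousOn (fun p : ℝ × ℝ => Real.cos p.2 * pd 0 h1 (circ p.1 p.2) +
    Real.sin p.2 * pd 1 h1 (circ p.1 p.2)) cyl := by fun_prop
  have A2 : ContinuousOn (fun p : ℝ × ℝ => Real.cos p.2 * pd 0 h2 (circ p.1 p.2) +
    Real.sin p.2 * pd 1 h2 (circ p.1 p.2)) cyl := by fun_prop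
  have per : ∀ r, circ r (2 * Real.pi) = circ r 0 := fun r => by simpa using circ_per r 0
  have inv0 : 0 < C⁻¹ := inv_pos.2 hC
  refine ⟨fun r θ => r * (Real.cos θ * pd 0 u (circ r θ) + Real.sin θ * pd 1 u (circ r θ)),
    fun r θ => r * (-Real.sin θ * pd 0 u (circ r θ) + Real.cos θ * pd 1 u (circ r θ)),
    fun r θ => (Real.cos θ * pd 0 u (circ r θ) + Real.sin θ * pd 1 u (circ r θ)) +
      r * (Real.cos θ * (Real.cos θ * pd 0 (pd 0 u) (circ r θ) + Real.sin θ * pd 1 (pd 0 u) (circ r θ))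
        + Real.sin θ * (Real.cos θ * pd 0 (pd 1 u) (circ r θ) + Real.sin θ * pd 1 (pd 1 u) (circ r θ))),
    fun r θ => r * ((-Real.sin θ * pd 0 u (circ r θ) + Real.cos θ * (-(r * Real.sin θ) *
        pd 0 (pd 0 u) (circ r θ) + r * Real.cos θ * pd 1 (pd 0 u) (circ r θ))) +
      (Real.cos θ * pd 1 u (circ r θ) + Real.sin θ * (-(r * Real.sin θ) *
        pd 0 (pd 1 u) (circ r θ) + r * Real.cos θ * pd 1 (pd 1 u) (circ r θ)))),
    fun r θ => (-Real.sin θ * pd 0 u (circ r θ) + Real.cos θ * pd 1 u (circ r θ)) +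
      r * (-Real.sin θ * (Real.cos θ * pd 0 (pd 0 u) (circ r θ) + Real.sin θ * pd 1 (pd 0 u) (circ r θ))
        + Real.cos θ * (Real.cos θ * pd 0 (pd 1 u) (circ r θ) + Real.sin θ * pd 1 (pd 1 u) (circ r θ))),
    fun r θ => r * ((-Real.cos θ * pd 0 u (circ r θ) + -Real.sin θ * (-(r * Real.sin θ) *
        pd 0 (pd 0 u) (circ r θ) + r * Real.cos θ * pd 1 (pd 0 u) (circ r θ))) +
      (-Real.sin θ * pd 1 u (circ r θ) + Real.cos θ * (-(r * Real.sin θ) *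
        pd 0 (pd 1 u) (circ r θ) + r * Real.cos θ * pd 1 (pd 1 u) (circ r θ)))),
    fun r θ => (Real.cos θ * pd 0 h1 (circ r θ) + Real.sin θ * pd 1 h1 (circ r θ)) *
        Real.exp (u (circ r θ)) + h1 (circ r θ) * (Real.exp (u (circ r θ)) *
          (Real.cos θ * pd 0 u (circ r θ) + Real.sin θ * pd 1 u (circ r θ))),
    fun r θ => (Real.cos θ * pd 0 h2 (circ r θ) + Real.sin θ * pd 1 h2 (circ r θ)) *
        Real.exp (-(u (circ r θ))) + h2 (circ r θ) * (Real.exp (-(u (circ r θ))) *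
          -(Real.cos θ * pd 0 u (circ r θ) + Real.sin θ * pd 1 u (circ r θ))), ?_⟩
  constructor
  · exact Cu
  · unfold Function.uncurry; fun_prop
  · unfold Function.uncurry; fun_prop
  · unfold Function.uncurry; fun_prop
  · unfold Function.uncurry; fun_prop
  · unfold Function.uncurry; fun_prop
  · unfold Function.uncurry; fun_prop
  · exact C1.mul CE
  · exact C2.mul CE2
  · exact (A1.mul CE).add (C1.mul (CE.mul A0))
  · exact (A2.mul CE2).add (C2.mul (CE2.mul A0.neg))
  · intro r hr θ
    have d0 := hasDeriv_r (dif (hp 0) (by norm_num) hr θ)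
    have d1 := hasDeriv_r (dif (hp 1) (by norm_num) hr θ)
    refine ((hasDerivAt_id r).mul ((d0.const_mul (Real.cos θ)).add
      (d1.const_mul (Real.sin θ)))).congr_deriv ?_
    simp
  · intro r hr θ
    have d0 := hasDeriv_r (dif (hp 0) (by norm_num) hr θ)
    have d1 := hasDeriv_r (dif (hp 1) (by norm_num) hr θ)
    refine ((hasDerivAt_id r).mul ((d0.const_mul (-Real.sin θ)).add
      (d1.const_mul (Real.cos θ)))).congr_deriv ?_
    simp
  · intro r hr θ
    exact (hasDeriv_r (dif hh1 (by norm_num) hr θ)).mul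
      ((hasDeriv_r (dif hu (by norm_num) hr θ)).exp)
  · intro r hr θ
    exact (hasDeriv_r (dif hh2 (by norm_num) hr θ)).mul
      ((hasDeriv_r (dif hu (by norm_num) hr θ)).neg.exp)
  · intro r hr θ
    have d0 := hasDeriv_θ (dif (hp 0) (by norm_num) hr θ)
    have d1 := hasDeriv_θ (dif (hp 1) (by norm_num) hr θ)
    exact (((Real.hasDerivAt_cos θ).mul d0).add ((Real.hasDerivAt_sin θ).mul d1)).const_mul r
  · intro r hr θ
    have d0 := hasDeriv_θ (dif (hp 0) (by norm_num) hr θ)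
    have d1 := hasDeriv_θ (dif (hp 1) (by norm_num) hr θ)
    exact (((Real.hasDerivAt_sin θ).neg.mul d0).add ((Real.hasDerivAt_cos θ).mul d1)).const_mul r
  · intro r hr θ
    refine (hasDeriv_θ (dif hu (by norm_num) hr θ)).congr_deriv ?_
    ring
  · intro r
    simp only [per]
  · intro r
    simp only [per, Real.cos_two_pi, Real.sin_two_pi, Real.cos_zero, Real.sin_zero]
  · intro r
    simp only [per, Real.cos_two_pi, Real.sin_two_pi, Real.cos_zero, Real.sin_zero]
  · intro r hr θ
    have e := heq _ (circ_mem hr θ)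
    have l : lap u (circ r θ) = pd 0 (pd 0 u) (circ r θ) + pd 1 (pd 1 u) (circ r θ) := by
      simp only [lap, Fin.sum_univ_two]; rfl
    rw [l] at e
    have cs := Real.sin_sq_add_cos_sq θ
    linear_combination r ^ 2 * e + r ^ 2 * (pd 0 (pd 0 u) (circ r θ) + pd 1 (pd 1 u) (circ r θ)) * cs
  · intro r hr θ
    have e := mixed hu (circ_mem hr θ)
    have cs := Real.sin_sq_add_cos_sq θ
    linear_combination (-r ^ 2 * (Real.sin θ ^ 2 + Real.cos θ ^ 2)) * e
  · intro θ; simp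
  · intro θ; simp
  · intro r hr θ
    have := hl1 _ (circ_mem hr θ)
    exact mul_nonneg (inv0.le.trans this) (Real.exp_pos _).le
  · intro r hr θ
    have := hl2 _ (circ_mem hr θ)
    exact mul_nonneg (inv0.le.trans this) (Real.exp_pos _).le
  · intro r hr θ
    have hr' : r ∈ Ioo (-1:ℝ) 1 := ⟨by linarith [hr.1], hr.2⟩
    have hx := circ_mem hr' θ
    have := poh_aux hC hr.1 (Real.exp_pos (u (circ r θ))) (pd_bound hr' (hb1 _ hx)) (hl1 _ hx)
    refine le_trans (le_of_eq ?_) this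
    congr 1
    ring
  · intro r hr θ
    have hr' : r ∈ Ioo (-1:ℝ) 1 := ⟨by linarith [hr.1], hr.2⟩
    have hx := circ_mem hr' θ
    have := poh_aux hC hr.1 (Real.exp_pos (-(u (circ r θ)))) (pd_bound hr' (hb2 _ hx)) (hl2 _ hx)
    refine le_trans (le_of_eq ?_) this
    congr 1
    ring

lemma mass_bound {f : E2 → ℝ} {C : ℝ} (hi : IntegrableOn f (ball (0:E2) 1))
    (hf : ∀ x ∈ ball (0:E2) 1, 0 ≤ f x) (hC : ∫ x in ball (0:E2) 1, f x ≤ C) :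
    ∫ x in ball (0:E2) (1 / 2), f x ≤ C := by
  refine (setIntegral_mono_set hi ?_ ?_).trans hC
  · exact (ae_restrict_iff' measurableSet_ball).2 (ae_of_all _ hf)
  · exact (ball_subset_ball (by norm_num)).eventuallyLE

/-- The estimate for each member of the sequence, in terms of masses. -/
lemma per_k {u h1 h2 : E2 → ℝ} {C CV : ℝ} (hC : 0 < C) (hu : ContDiffOn ℝ 2 u (ball 0 1))
    (heq : ∀ x ∈ ball (0:E2) 1, lap u x + h1 x * Real.exp (u x) - h2 x * Real.exp (-(u x)) = 0)
    (hh1 : ContDiffOn ℝ 3 h1 (ball 0 1)) (hh2 : ContDiffOn ℝ 3 h2 (ball 0 1))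
    (hl1 : ∀ x ∈ ball (0:E2) 1, C⁻¹ ≤ h1 x) (hl2 : ∀ x ∈ ball (0:E2) 1, C⁻¹ ≤ h2 x)
    (hb1 : ∀ x ∈ ball (0:E2) 1, ‖iteratedFDerivWithin ℝ 1 h1 (ball 0 1) x‖ ≤ C)
    (hb2 : ∀ x ∈ ball (0:E2) 1, ‖iteratedFDerivWithin ℝ 1 h2 (ball 0 1) x‖ ≤ C)
    (hi1 : IntegrableOn (fun x => h1 x * Real.exp (u x)) (ball (0:E2) 1))
    (hi2 : IntegrableOn (fun x => h2 x * Real.exp (-(u x))) (ball (0:E2) 1))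
    (he1 : ∫ x in ball (0:E2) 1, h1 x * Real.exp (u x) ≤ C)
    (he2 : ∫ x in ball (0:E2) 1, h2 x * Real.exp (-(u x)) ≤ C)
    (hCV : ∀ x ∈ sphere (0:E2) (1 / 2), |u x| ≤ CV) {m1 m2 : ℝ → ℝ}
    (hm1 : ∀ r, m1 r = (2 * Real.pi)⁻¹ * ∫ x in ball (0:E2) r, h1 x * Real.exp (u x))
    (hm2 : ∀ r, m2 r = (2 * Real.pi)⁻¹ * ∫ x in ball (0:E2) r, h2 x * Real.exp (-(u x)))
    {s L : ℝ} (hs : 0 < s) (hL : 1 < L) (hsL : 2 * s * L ≤ 1 / 4) :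
    Real.pi * |(m1 s - m2 s) ^ 2 - 4 * (m1 s + m2 s)| ≤
      (2 * C + 4) * (2 * Real.pi * ((m1 (2 * s) + m2 (2 * s)) - (m1 s + m2 s))) +
      2 * (2 * Real.pi * ((m1 (2 * s * L) + m2 (2 * s * L)) - (m1 (s / L) + m2 (s / L)))) ^ 2 +
      (2 * C) ^ 2 / (L - 1) +
      s * (2 * C ^ 2 * (2 * C) + (2 * C) * ((2 * C) + 4 * Real.pi * CV) * (8 / (1 / 2))) := by
  obtain ⟨a, b, ar, aθ, br, bθ, f1r, f2r, P⟩ := polarSys_of hC hu heq hh1 hh2 hl1 hl2 hb1 hb2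
  have hL0 : 0 < L := by linarith
  have hsL1 : 2 * s < 2 * s * L := by nlinarith
  have hsL' : s / L < s := div_lt_self hs hL
  have hsL0 : 0 < s / L := by positivity
  have hpi := Real.pi_pos
  have inv0 : 0 < C⁻¹ := inv_pos.2 hC
  have sph : ∀ θ, circ (1 / 2) θ ∈ sphere (0:E2) (1 / 2) := by
    intro θ
    rw [mem_sphere_zero_iff_norm, circ_norm]
    norm_num
  have hV : ∀ θ, |u (circ (1 / 2) θ)| ≤ CV := fun θ => hCV _ (sph θ)
  have CV0 : 0 ≤ CV := (abs_nonneg _).trans (hV 0)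
  have cf1 : ContinuousOn (fun x => h1 x * Real.exp (u x)) (ball 0 1) :=
    hh1.continuousOn.mul (Real.continuous_exp.comp_continuousOn hu.continuousOn)
  have cf2 : ContinuousOn (fun x => h2 x * Real.exp (-(u x))) (ball 0 1) :=
    hh2.continuousOn.mul (Real.continuous_exp.comp_continuousOn hu.continuousOn.neg)
  have est := P.main_est (sq_nonneg C) (R := 1 / 2) (CV := CV) hs hL (by linarith) (by norm_num) hV
  set f1 : ℝ → ℝ → ℝ := fun r θ => h1 (circ r θ) * Real.exp (u (circ r θ)) with hf1
  set f2 : ℝ → ℝ → ℝ := fun r θ => h2 (circ r θ) * Real.exp (-(u (circ r θ))) with hf2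
  have p1 : ∀ r, 0 < r → r < 1 → ∫ x in ball (0:E2) r, h1 x * Real.exp (u x) = Md f1 r :=
    fun r h0 h1 => polar_int _ cf1 h0 h1
  have p2 : ∀ r, 0 < r → r < 1 → ∫ x in ball (0:E2) r, h2 x * Real.exp (-(u x)) = Md f2 r :=
    fun r h0 h1 => polar_int _ cf2 h0 h1
  have e1 : ∀ r, 0 < r → r < 1 → Md f1 r = 2 * Real.pi * m1 r := by
    intro r h0 h1
    rw [hm1, p1 r h0 h1]
    field_simp
  have e2 : ∀ r, 0 < r → r < 1 → Md f2 r = 2 * Real.pi * m2 r := by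
    intro r h0 h1
    rw [hm2, p2 r h0 h1]
    field_simp
  have B1 : Md f1 (1 / 2) ≤ C := by
    rw [← p1 _ (by norm_num) (by norm_num)]
    exact mass_bound hi1 (fun x hx => mul_nonneg (inv0.le.trans (hl1 x hx)) (Real.exp_pos _).le) he1
  have B2 : Md f2 (1 / 2) ≤ C := by
    rw [← p2 _ (by norm_num) (by norm_num)]
    exact mass_bound hi2 (fun x hx => mul_nonneg (inv0.le.trans (hl2 x hx)) (Real.exp_pos _).le) he2
  have Z1 : Md f1 0 = 0 := by simp [Md]
  have Z2 : Md f2 0 = 0 := by simp [Md]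
  have N1 := P.Md1_mono le_rfl (by norm_num : (0:ℝ) ≤ 1 / 2) (by norm_num)
  have N2 := P.Md2_mono le_rfl (by norm_num : (0:ℝ) ≤ 1 / 2) (by norm_num)
  have b1 := P.Md1_mono hs.le (by linarith : s ≤ 2 * s) (by linarith)
  have b2 := P.Md2_mono hs.le (by linarith : s ≤ 2 * s) (by linarith)
  have M0 : 0 ≤ Md f1 (1 / 2) + Md f2 (1 / 2) := by linarith
  have MC : Md f1 (1 / 2) + Md f2 (1 / 2) ≤ 2 * C := by linarith
  have m0 : 0 ≤ (Md f1 (2 * s) + Md f2 (2 * s)) - (Md f1 s + Md f2 s) := by linarith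
  have hL1 : 0 < L - 1 := by linarith
  generalize Md f1 (1 / 2) + Md f2 (1 / 2) = M at est M0 MC
  have est2 := est.trans (b :=  _) (c := (2 * C + 4) * ((Md f1 (2 * s) + Md f2 (2 * s)) - (Md f1 s + Md f2 s)) +
      2 * ((Md f1 (2 * s * L) + Md f2 (2 * s * L)) - (Md f1 (s / L) + Md f2 (s / L))) ^ 2 +
      (2 * C) ^ 2 / (L - 1) +
      s * (2 * C ^ 2 * (2 * C) + (2 * C) * ((2 * C) + 4 * Real.pi * CV) * (8 / (1 / 2)))) (by gcongr)
  rw [e1 s hs (by linarith), e2 s hs (by linarith), e1 (2 * s) (by linarith) (by linarith),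
    e2 (2 * s) (by linarith) (by linarith), e1 (2 * s * L) (by linarith) (by linarith),
    e2 (2 * s * L) (by linarith) (by linarith), e1 (s / L) hsL0 (by linarith),
    e2 (s / L) hsL0 (by linarith)] at est2
  simp only [← mul_add, ← mul_sub] at est2 ⊢
  refine le_trans (le_of_eq ?_) est2
  rw [← abs_of_pos hpi, ← abs_mul, abs_of_pos hpi]
  congr 1
  field_simp
  ring

lemma limit_step {F1 F2 : ℕ → ℝ → ℝ} {σ₁ σ₂ A B K : ℝ} (h1 : IsBlowUpMass F1 σ₁)
    (h2 : IsBlowUpMass F2 σ₂)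
    (h : ∀ k s L, 0 < s → 1 < L → 2 * s * L ≤ 1 / 4 →
      Real.pi * |(F1 k s - F2 k s) ^ 2 - 4 * (F1 k s + F2 k s)| ≤
      A * (2 * Real.pi * ((F1 k (2 * s) + F2 k (2 * s)) - (F1 k s + F2 k s))) +
      2 * (2 * Real.pi * ((F1 k (2 * s * L) + F2 k (2 * s * L)) -
        (F1 k (s / L) + F2 k (s / L)))) ^ 2 +
      B / (L - 1) + s * K) :
    4 * (σ₁ + σ₂) = (σ₁ - σ₂)^2 := by
  obtain ⟨S1, hS1, hl1⟩ := h1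
  obtain ⟨S2, hS2, hl2⟩ := h2
  have st1 : ∀ s L, 0 < s → 1 < L → 2 * s * L ≤ 1 / 4 →
      Real.pi * |(S1 s - S2 s) ^ 2 - 4 * (S1 s + S2 s)| ≤
      A * (2 * Real.pi * ((S1 (2 * s) + S2 (2 * s)) - (S1 s + S2 s))) +
      2 * (2 * Real.pi * ((S1 (2 * s * L) + S2 (2 * s * L)) - (S1 (s / L) + S2 (s / L)))) ^ 2 +
      B / (L - 1) + s * K := by
    intro s L hs hL hsL
    have hL0 : 0 < L := by linarith
    have hsL1 : 2 * s < 2 * s * L := by nlinarith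
    have hsL' : s / L < s := div_lt_self hs hL
    have hsL0 : 0 < s / L := by positivity
    have t1 := hS1 s hs (by linarith)
    have t2 := hS2 s hs (by linarith)
    have t3 := hS1 (2 * s) (by linarith) (by linarith)
    have t4 := hS2 (2 * s) (by linarith) (by linarith)
    have t5 := hS1 (2 * s * L) (by linarith) (by linarith)
    have t6 := hS2 (2 * s * L) (by linarith) (by linarith)
    have t7 := hS1 (s / L) hsL0 (by linarith)
    have t8 := hS2 (s / L) hsL0 (by linarith)
    have l := ((((t1.sub t2).pow 2).sub ((t1.add t2).const_mul 4)).abs).const_mul Real.pi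
    have r := ((((((t3.add t4).sub (t1.add t2)).const_mul (2 * Real.pi)).const_mul A).add
        ((((((t5.add t6).sub (t7.add t8)).const_mul (2 * Real.pi)).pow 2).const_mul 2))).add
        (tendsto_const_nhds (x := B / (L - 1)))).add (tendsto_const_nhds (x := s * K))
    exact le_of_tendsto_of_tendsto' l r (fun k => h k s L hs hL hsL)
  have sc : ∀ c : ℝ, 0 < c → Tendsto (fun s : ℝ => c * s) (𝓝[>] 0) (𝓝[>] 0) := by
    intro c hc
    refine tendsto_nhdsWithin_iff.2 ⟨?_, ?_⟩
    · have : Tendsto (fun s : ℝ => c * s) (𝓝 0) (𝓝 (c * 0)) :=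
        (continuous_const.mul continuous_id).tendsto 0
      rw [mul_zero] at this
      exact this.mono_left nhdsWithin_le_nhds
    · filter_upwards [self_mem_nhdsWithin] with s hs
      exact mul_pos hc hs
  have st2 : ∀ L, 1 < L → Real.pi * |(σ₁ - σ₂) ^ 2 - 4 * (σ₁ + σ₂)| ≤ B / (L - 1) := by
    intro L hL
    have hL0 : 0 < L := by linarith
    have q1 := hl1.comp (sc 2 (by norm_num))
    have q2 := hl2.comp (sc 2 (by norm_num))
    have q3 := hl1.comp (sc (2 * L) (by linarith))
    have q4 := hl2.comp (sc (2 * L) (by linarith))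
    have q5 := hl1.comp (sc L⁻¹ (by positivity))
    have q6 := hl2.comp (sc L⁻¹ (by positivity))
    have q7 : Tendsto (fun s : ℝ => s * K) (𝓝[>] 0) (𝓝 (0 * K)) :=
      ((continuous_id.mul continuous_const).tendsto' 0 _ rfl).mono_left nhdsWithin_le_nhds
    have lhs := ((((hl1.sub hl2).pow 2).sub ((hl1.add hl2).const_mul 4)).abs).const_mul Real.pi
    have rhs := ((((((q1.add q2).sub (hl1.add hl2)).const_mul (2 * Real.pi)).const_mul A).add
        ((((((q3.add q4).sub (q5.add q6)).const_mul (2 * Real.pi)).pow 2).const_mul 2))).add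
        (tendsto_const_nhds (x := B / (L - 1)))).add q7
    have := le_of_tendsto_of_tendsto lhs rhs ?_
    · simpa using this
    · have ev : ∀ᶠ s : ℝ in 𝓝[>] 0, s < 1 / (8 * L) :=
        nhdsWithin_le_nhds (gt_mem_nhds (by positivity))
      filter_upwards [ev, self_mem_nhdsWithin] with s hs hs0
      have hs0' : (0:ℝ) < s := hs0
      rw [lt_div_iff₀ (by positivity)] at hs
      have := st1 s L hs0 hL (by linarith)
      simp only [Function.comp_apply]
      rw [show 2 * L * s = 2 * s * L by ring, show L⁻¹ * s = s / L by ring]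
      exact this
  have lim : Tendsto (fun L : ℝ => B / (L - 1)) atTop (𝓝 0) :=
    (tendsto_atTop_add_const_right atTop (-1) tendsto_id).const_div_atTop B
  have fin : Real.pi * |(σ₁ - σ₂) ^ 2 - 4 * (σ₁ + σ₂)| ≤ 0 :=
    ge_of_tendsto lim (by filter_upwards [eventually_gt_atTop 1] with L hL using st2 L hL)
  have hz : |(σ₁ - σ₂) ^ 2 - 4 * (σ₁ + σ₂)| ≤ 0 := by
    by_contra hne
    push Not at hne
    have := mul_pos Real.pi_pos hne
    linarith
  have := abs_nonpos_iff.1 hz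
  linarith

/-- Proposition 3.1: under the standing blow-up assumptions, the blow-up
masses satisfy the Pohozaev-type relation `4(σ₁ + σ₂) = (σ₁ − σ₂)²`. -/
theorem pohozaev_relation (u h₁ h₂ : ℕ → E2 → ℝ) (σ₁ σ₂ : ℝ)
    (hsetup : BlowUpSetup u h₁ h₂)
    (hσ₁ : IsBlowUpMass (mass1 u h₁) σ₁)
    (hσ₂ : IsBlowUpMass (mass2 u h₂) σ₂) :
    4 * (σ₁ + σ₂) = (σ₁ - σ₂)^2 := by
  obtain ⟨hu, heq, hi1, hi2, ⟨C, hC, hcd, hlb, hder, -, he1, he2⟩, hK, -⟩ := hsetup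
  obtain ⟨CV, hCV⟩ := hK (sphere (0:E2) (1 / 2)) (isCompact_sphere _ _) (by
    intro x hx
    rw [mem_sphere_zero_iff_norm] at hx
    refine ⟨by rw [mem_ball_zero_iff, hx]; norm_num, ?_⟩
    rintro rfl
    norm_num at hx)
  refine limit_step (A := 2 * C + 4) (B := (2 * C) ^ 2)
    (K := 2 * C ^ 2 * (2 * C) + (2 * C) * ((2 * C) + 4 * Real.pi * CV) * (8 / (1 / 2))) hσ₁ hσ₂ (fun k s L hs hL hsL => ?_)
  exact per_k (CV := CV) hC (hu k) (heq k) (hcd k).1 (hcd k).2 (fun x hx => (hlb k x hx).1)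
    (fun x hx => (hlb k x hx).2.2.1) (fun x hx => (hder k x hx 1 (by norm_num)).1)
    (fun x hx => (hder k x hx 1 (by norm_num)).2) (hi1 k) (hi2 k) (he1 k) (he2 k) (hCV k)
    (fun r => rfl) (fun r => rfl) hs hL hsL

end
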